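/- arXiv:2207.09552 — 3 statements merged into one kernel-verified Lean document; each statement's English description precedes it below -/
import Mathlib

section
/- Let K be a centrally symmetric convex body in ℝ² with boundary C, and let Λ be a K-critical lattice. Then there exist three pairs of lattice points ±p₁, ±p₂, ±p₃ of Λ lying on C, which can be chosen so that p₁ + p₂ = p₃ and any two of p₁, p₂, p₃ form a basis of Λ. Conversely, if points p₁, p₂, p₃ on C satisfy p₁ + p₂ = p₃, then the lattice generated by p₁ and p₂ is K-admissible. -/
open MeasureTheory Set Matrix Pointwise

noncomputable section

/-- The lattice `A · ℤⁿ` associated with an (invertible) matrix `A`. -/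
def latticeOf {n : ℕ} (A : Matrix (Fin n) (Fin n) ℝ) : Set (Fin n → ℝ) :=
  Set.range fun m : Fin n → ℤ => A.mulVec fun i => (m i : ℝ)

/-- `Λ + K` is non-separable: every affine hyperplane `{y | ⟨u,y⟩ = c}` (with `u ≠ 0`)
meets `x + K` for some `x ∈ Λ`. -/
def NonSeparable {n : ℕ} (Λ K : Set (Fin n → ℝ)) : Prop :=
  ∀ u : Fin n → ℝ, u ≠ 0 → ∀ c : ℝ, ∃ x ∈ Λ, ∃ y ∈ K, u ⬝ᵥ (x + y) = c

/-- `d_{n,n-1}(K)`: the smallest density `|K|/d(Λ)` of a non-separable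
lattice of translates of `K`. -/
def dTrans {n : ℕ} (K : Set (Fin n → ℝ)) : ℝ :=
  sInf {d : ℝ | ∃ A : Matrix (Fin n) (Fin n) ℝ, A.det ≠ 0 ∧
    NonSeparable (latticeOf A) K ∧ d = (volume K).toReal / |A.det|}

/-- A set `Λ` is `K`-admissible if it meets the interior of `K` only in `0`. -/
def Admissible {n : ℕ} (Λ K : Set (Fin n → ℝ)) : Prop :=
  Λ ∩ interior K = {0}

/-- The critical determinant `Δ(K)`: the smallest determinant of a `K`-admissible lattice. -/
def critDet {n : ℕ} (K : Set (Fin n → ℝ)) : ℝ :=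
  sInf {d : ℝ | ∃ A : Matrix (Fin n) (Fin n) ℝ, A.det ≠ 0 ∧
    Admissible (latticeOf A) K ∧ d = |A.det|}

/-- The densest lattice packing density `δ_L(K) = |K| / (2ⁿ Δ(K))` of a
centrally symmetric convex body `K ⊆ ℝⁿ`. -/
def deltaL {n : ℕ} (K : Set (Fin n → ℝ)) : ℝ :=
  (volume K).toReal / (2 ^ n * critDet K)

/-- `v, w` form a basis of `Λ`: they generate `Λ` as a group. -/
def IsLatticeBasis (v w : Fin 2 → ℝ) (Λ : Set (Fin 2 → ℝ)) : Prop :=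
  Λ = Set.range fun mn : ℤ × ℤ => (mn.1 : ℝ) • v + (mn.2 : ℝ) • w

/-!
Write `p` for the gauge of `K`, so that `int K = {p < 1}` and `∂K = {p = 1}`. If `p u = p v = 1` and
`p (v ± u) ≥ 1`, then `ℤu + ℤv` is `K`-admissible; this gives the converse, and it also says that a
critical lattice has the least area among the lattices spanned by such pairs.

For the direct part, take a reduced basis of the critical lattice: `p u ≤ p v ≤ p (v ± u)`. Scaling
both vectors to the unit sphere keeps the lattice admissible, so minimality gives `p u = p v = 1`.
If both `p (v + u)` and `p (v - u)` exceeded `1`, then the pairs `(u + s v, v + t u)` with small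
`s, t`, scaled to the unit sphere, would still span admissible lattices, and minimality would read
`p (u + s v) * p (v + t u) ≤ |1 - s t|`. The cases `(s, t) = (-ε, 0)` and `(0, -ε)` together with
convexity force `p (u + ε v), p (v + ε u) ≥ 1`, which contradicts the case `(ε, ε)`.
-/

open Submodule Topology

section SpanPair

variable {R M : Type*} [Ring R] [AddCommGroup M] [Module R M]

lemma span_pair_add_smul_left (u v : M) (c : R) : span R {u, v + c • u} = span R {u, v} := by
  have hu (w : M) : u ∈ span R {u, w} := subset_span (by simp)
  have hv (w : M) : w ∈ span R {u, w} := subset_span (by simp)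
  refine le_antisymm (span_le.2 (pair_subset (hu v) ?_)) (span_le.2 (pair_subset (hu _) ?_))
  · exact add_mem (hv v) (smul_mem _ c (hu v))
  · simpa using sub_mem (hv (v + c • u)) (smul_mem _ c (hu (v + c • u)))

lemma span_pair_neg_right (u v : M) : span R {u, -v} = span R {u, v} := by
  rw [span_insert, span_insert, ← Set.neg_singleton, span_neg]

end SpanPair

/-! ### Reduced pairs -/

section SeminormPairs

variable {E : Type*} [AddCommGroup E] [Module ℝ E] {p : Seminorm ℝ E} {u v : E}

/-- A pair of vectors that is reduced in the sense of Gauss and Minkowski with respect to a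
seminorm: neither adding the shorter vector to the longer one nor subtracting it shortens the
latter. -/
structure IsReducedPair (p : Seminorm ℝ E) (u v : E) : Prop where
  le : p u ≤ p v
  le_add : p v ≤ p (v + u)
  le_sub : p v ≤ p (v - u)

/-- A reduced pair of unit vectors. The lattice spanned by such a pair is admissible for the unit
ball, and these are the lattices with which a critical lattice is compared. -/
structure IsUnitReducedPair (p : Seminorm ℝ E) (u v : E) : Prop where
  left : p u = 1
  right : p v = 1
  one_le_add : 1 ≤ p (v + u)
  one_le_sub : 1 ≤ p (v - u)

/-- The positive multiple of `x` on the unit sphere of `p`; it is `0` if `p x = 0`. -/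
def unitScale (p : Seminorm ℝ E) (x : E) : E := (p x)⁻¹ • x

lemma map_unitScale {x : E} (hx : p x ≠ 0) : p (unitScale p x) = 1 := by
  rw [unitScale, map_smul_eq_mul, norm_inv, Real.norm_of_nonneg (apply_nonneg p x),
    inv_mul_cancel₀ hx]

lemma unitScale_of_map_eq_one {x : E} (hx : p x = 1) : unitScale p x = x := by
  simp [unitScale, hx]

lemma map_pos_of_map_unitScale_eq_one {x : E} (hx : p (unitScale p x) = 1) : 0 < p x := by
  refine (apply_nonneg p x).lt_of_ne' fun h => ?_
  simp [unitScale, h] at hx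

lemma map_zsmul_eq_abs_mul (p : Seminorm ℝ E) (m : ℤ) (x : E) : p (m • x) = |(m : ℝ)| * p x := by
  rw [← Int.cast_smul_eq_zsmul ℝ, map_smul_eq_mul, Real.norm_eq_abs]

lemma two_mul_map_le_map_add_add_map_sub (p : Seminorm ℝ E) (x y : E) :
    2 * p x ≤ p (x + y) + p (x - y) := by
  calc 2 * p x = p ((2 : ℝ) • x) := by simp [map_smul_eq_mul]
    _ = p ((x + y) + (x - y)) := by congr 1; module
    _ ≤ p (x + y) + p (x - y) := map_add_le_add p _ _

lemma isUnitReducedPair_of_map_add_eq_one (hu : p u = 1) (hv : p v = 1) (huv : p (u + v) = 1) :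
    IsUnitReducedPair p u v where
  left := hu
  right := hv
  one_le_add := by rw [add_comm, huv]
  one_le_sub := by
    have := two_mul_map_le_map_add_add_map_sub p v u
    rw [add_comm v u, hv, huv] at this
    linarith

-- `m u + n v` has seminorm at least `||m| - |n||`, which settles all cases except `m = ± n`.
lemma IsUnitReducedPair.one_le_map_zsmul_add_zsmul (h : IsUnitReducedPair p u v) {m n : ℤ}
    (hmn : m ≠ 0 ∨ n ≠ 0) : 1 ≤ p (m • u + n • v) := by
  have hdiff : |(|(m : ℝ)| - |(n : ℝ)|)| ≤ p (m • u + n • v) := by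
    simpa [map_zsmul_eq_abs_mul, h.left, h.right] using
      abs_sub_map_le_sub p (m • u) (-(n • v))
  by_cases habs : |m| = |n|
  · have hm : 1 ≤ |(m : ℝ)| := by
      have : 1 ≤ |m| := Int.one_le_abs (by grind)
      exact_mod_cast this
    rcases abs_eq_abs.1 habs with rfl | rfl
    · rw [← smul_add, map_zsmul_eq_abs_mul, add_comm]
      exact one_le_mul_of_one_le_of_one_le hm h.one_le_add
    · rw [neg_smul, neg_add_eq_sub, ← smul_sub, map_zsmul_eq_abs_mul]
      exact one_le_mul_of_one_le_of_one_le (by simpa using hm) h.one_le_sub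
  · have : 1 ≤ |(|m| - |n|)| := Int.one_le_abs (sub_ne_zero.2 habs)
    exact hdiff.trans' (by exact_mod_cast this)

lemma IsUnitReducedPair.one_le_map_of_mem_span (h : IsUnitReducedPair p u v) {x : E}
    (hx : x ∈ span ℤ {u, v}) (hx0 : x ≠ 0) : 1 ≤ p x := by
  obtain ⟨m, n, rfl⟩ := mem_span_pair.1 hx
  refine h.one_le_map_zsmul_add_zsmul ?_
  contrapose! hx0
  simp [hx0]

-- By convexity, `t ↦ p (v + t u)` cannot drop below its value at `0` once it has risen at `1`.
lemma le_map_add_smul_of_le_map_add (h : p v ≤ p (v + u)) {t : ℝ} (ht : 1 ≤ t) :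
    p v ≤ p (v + t • u) := by
  have htri : t * p (v + u) ≤ (t - 1) * p v + p (v + t • u) := by
    calc t * p (v + u) = p (t • (v + u)) := by
          rw [map_smul_eq_mul, Real.norm_of_nonneg (by linarith)]
      _ = p ((t - 1) • v + (v + t • u)) := by congr 1; module
      _ ≤ p ((t - 1) • v) + p (v + t • u) := map_add_le_add p _ _
      _ = (t - 1) * p v + p (v + t • u) := by
          rw [map_smul_eq_mul, Real.norm_of_nonneg (by linarith)]
  nlinarith

lemma one_le_map_unitScale_add_unitScale (hu : 0 < p u) (huv : p u ≤ p v)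
    (h : p v ≤ p (v + u)) : 1 ≤ p (unitScale p v + unitScale p u) := by
  have hv : 0 < p v := hu.trans_le huv
  have hscale : unitScale p v + unitScale p u = (p v)⁻¹ • (v + (p v / p u) • u) := by
    rw [unitScale, unitScale, smul_add, smul_smul]
    congr 2
    field_simp
  rw [hscale, map_smul_eq_mul, Real.norm_of_nonneg (by positivity), ← div_eq_inv_mul,
    one_le_div₀ hv]
  exact le_map_add_smul_of_le_map_add h ((one_le_div₀ hu).2 huv)

lemma IsReducedPair.isUnitReducedPair_unitScale (h : IsReducedPair p u v) (hu : 0 < p u) :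
    IsUnitReducedPair p (unitScale p u) (unitScale p v) where
  left := map_unitScale hu.ne'
  right := map_unitScale (hu.trans_le h.le).ne'
  one_le_add := one_le_map_unitScale_add_unitScale hu h.le h.le_add
  one_le_sub := by
    have := one_le_map_unitScale_add_unitScale (p := p) (u := -u) (v := v) (by simpa using hu)
      (by simpa using h.le) (by simpa [← sub_eq_add_neg] using h.le_sub)
    simpa [unitScale, ← sub_eq_add_neg] using this

lemma exists_span_pair_eq_forall_map_add_map_le {L : Submodule ℤ E} {a b : E}
    (hab : span ℤ {a, b} = L) (hfin : ∀ c : ℝ, {x ∈ (L : Set E) | p x ≤ c}.Finite) :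
    ∃ u v, span ℤ {u, v} = L ∧ ∀ x y, span ℤ {x, y} = L → p u + p v ≤ p x + p y := by
  let short : Set (E × E) := {q | span ℤ {q.1, q.2} = L ∧ p q.1 + p q.2 ≤ p a + p b}
  have hshort : short.Finite := by
    refine ((hfin (p a + p b)).prod (hfin (p a + p b))).subset ?_
    rintro ⟨u, v⟩ ⟨huv : span ℤ {u, v} = L, hle : p u + p v ≤ p a + p b⟩
    have hu : u ∈ L := huv ▸ subset_span (by simp)
    have hv : v ∈ L := huv ▸ subset_span (by simp)
    exact ⟨⟨hu, by linarith [apply_nonneg p v]⟩, ⟨hv, by linarith [apply_nonneg p u]⟩⟩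
  obtain ⟨⟨u, v⟩, ⟨huv, huvab⟩, hmin⟩ :=
    exists_min_image short (fun q => p q.1 + p q.2) hshort ⟨(a, b), hab, le_rfl⟩
  refine ⟨u, v, huv, fun x y hxy => ?_⟩
  by_cases hle : p x + p y ≤ p a + p b
  · exact hmin (x, y) ⟨hxy, hle⟩
  · exact huvab.trans (le_of_not_ge hle)

lemma exists_isReducedPair_span_eq {L : Submodule ℤ E} {a b : E} (hab : span ℤ {a, b} = L)
    (hfin : ∀ c : ℝ, {x ∈ (L : Set E) | p x ≤ c}.Finite) :
    ∃ u v, span ℤ {u, v} = L ∧ IsReducedPair p u v := by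
  obtain ⟨u, v, huv, hmin⟩ := exists_span_pair_eq_forall_map_add_map_le hab hfin
  wlog hle : p u ≤ p v generalizing u v
  · exact this v u (by rwa [pair_comm]) (fun x y hxy => add_comm (p u) _ ▸ hmin x y hxy)
      (le_of_not_ge hle)
  have hstep (c : ℤ) : p v ≤ p (v + c • u) := by
    have := hmin u (v + c • u) ((span_pair_add_smul_left u v c).trans huv)
    linarith
  exact ⟨u, v, huv, hle, by simpa using hstep 1, by
    simpa [← sub_eq_add_neg] using hstep (-1)⟩

/-! ### Pairs of least area -/

variable {ω : LinearMap.BilinForm ℝ E}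

-- `u = k a + l b` and `v = m a + n b` give `ω u v = (k n - l m) ω a b` with an integral factor.
lemma abs_le_abs_of_mem_span_pair (hω : ω.IsAlt) {a b : E} (hu : u ∈ span ℤ {a, b})
    (hv : v ∈ span ℤ {a, b}) (huv : ω u v ≠ 0) : |ω a b| ≤ |ω u v| := by
  obtain ⟨k, l, rfl⟩ := mem_span_pair.1 hu
  obtain ⟨m, n, rfl⟩ := mem_span_pair.1 hv
  have harea : ω (k • a + l • b) (m • a + n • b) = ((k * n - l * m : ℤ) : ℝ) * ω a b := by
    simp only [← Int.cast_smul_eq_zsmul ℝ, map_add, map_smul, LinearMap.add_apply,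
      LinearMap.smul_apply, hω.self_eq_zero, ← hω.neg_eq a b, smul_eq_mul]
    push_cast
    ring
  rw [harea] at huv ⊢
  have hfactor : (1 : ℝ) ≤ |((k * n - l * m : ℤ) : ℝ)| := by
    have := Int.one_le_abs (Int.cast_ne_zero.1 (left_ne_zero_of_mul huv))
    exact_mod_cast this
  rw [abs_mul]
  exact le_mul_of_one_le_left (abs_nonneg _) hfactor

lemma abs_eq_abs_of_span_pair_eq (hω : ω.IsAlt) {a b : E} (h : span ℤ {u, v} = span ℤ {a, b})
    (hab : ω a b ≠ 0) : |ω u v| = |ω a b| := by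
  have hle : |ω u v| ≤ |ω a b| := abs_le_abs_of_mem_span_pair hω
    (h ▸ subset_span (by simp)) (h ▸ subset_span (by simp)) hab
  have huv : ω u v ≠ 0 := by
    intro h0
    obtain ⟨k, l, hkl⟩ := mem_span_pair.1 (h ▸ subset_span (by simp) : a ∈ span ℤ {u, v})
    obtain ⟨m, n, hmn⟩ := mem_span_pair.1 (h ▸ subset_span (by simp) : b ∈ span ℤ {u, v})
    apply hab
    simp [← hkl, ← hmn, hω.self_eq_zero, h0, ← hω.neg_eq u v]
  exact hle.antisymm (abs_le_abs_of_mem_span_pair hω (h ▸ subset_span (by simp))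
    (h ▸ subset_span (by simp)) huv)

/-- `δ` bounds from below the `ω`-area of every nondegenerate unit reduced pair. If `p` is the gauge
of a planar body, the critical determinant is such a bound. -/
def IsAreaLowerBound (p : Seminorm ℝ E) (ω : LinearMap.BilinForm ℝ E) (δ : ℝ) : Prop :=
  ∀ ⦃a b⦄, IsUnitReducedPair p a b → ω a b ≠ 0 → δ ≤ |ω a b|

lemma IsAreaLowerBound.mul_map_mul_map_le {δ : ℝ} (hδ : IsAreaLowerBound p ω δ) {x y : E}
    (h : IsUnitReducedPair p (unitScale p x) (unitScale p y)) (hxy : ω x y ≠ 0) :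
    δ * (p x * p y) ≤ |ω x y| := by
  have hx : 0 < p x := map_pos_of_map_unitScale_eq_one h.left
  have hy : 0 < p y := map_pos_of_map_unitScale_eq_one h.right
  have harea : ω (unitScale p x) (unitScale p y) = ω x y / (p x * p y) := by
    simp only [unitScale, map_smul, LinearMap.smul_apply, smul_eq_mul]
    field_simp
  have hle := hδ h (by rw [harea]; positivity)
  rwa [harea, abs_div, abs_of_pos (mul_pos hx hy), le_div_iff₀ (mul_pos hx hy)] at hle

lemma IsReducedPair.isUnitReducedPair_of_isAreaLowerBound (h : IsReducedPair p u v)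
    (hu : 1 ≤ p u) (huv : ω u v ≠ 0) (hmin : IsAreaLowerBound p ω |ω u v|) :
    IsUnitReducedPair p u v := by
  have hprod : p u * p v ≤ 1 := by
    have := hmin.mul_map_mul_map_le (h.isUnitReducedPair_unitScale (by linarith)) huv
    exact (mul_le_iff_le_one_right (abs_pos.2 huv)).1 this
  have hu1 : p u = 1 := by nlinarith [h.le]
  have hv1 : p v = 1 := by nlinarith [h.le]
  exact ⟨hu1, hv1, hv1 ▸ h.le_add, hv1 ▸ h.le_sub⟩

variable [TopologicalSpace E] [IsTopologicalAddGroup E] [ContinuousSMul ℝ E]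

lemma IsUnitReducedPair.eventually_unitScale (h : IsUnitReducedPair p u v) (hp : Continuous p)
    (hadd : 1 < p (v + u)) (hsub : 1 < p (v - u)) :
    ∀ᶠ q : ℝ × ℝ in 𝓝 0,
      IsUnitReducedPair p (unitScale p (u + q.1 • v)) (unitScale p (v + q.2 • u)) := by
  let x (q : ℝ × ℝ) : E := u + q.1 • v
  let y (q : ℝ × ℝ) : E := v + q.2 • u
  have hx0 : x 0 = u := by simp [x]
  have hy0 : y 0 = v := by simp [y]
  have hpx : p (x 0) ≠ 0 := by simp [hx0, h.left]
  have hpy : p (y 0) ≠ 0 := by simp [hy0, h.right]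
  have hcx : ContinuousAt x 0 := by fun_prop
  have hcy : ContinuousAt y 0 := by fun_prop
  have hsx : ContinuousAt (fun q => unitScale p (x q)) 0 :=
    ((hp.continuousAt.comp hcx).inv₀ hpx).smul hcx
  have hsy : ContinuousAt (fun q => unitScale p (y q)) 0 :=
    ((hp.continuousAt.comp hcy).inv₀ hpy).smul hcy
  have hscale : unitScale p (x 0) = u ∧ unitScale p (y 0) = v := by
    rw [hx0, hy0]
    exact ⟨unitScale_of_map_eq_one h.left, unitScale_of_map_eq_one h.right⟩
  filter_upwards [(hp.continuousAt.comp hcx).eventually_ne hpx,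
    (hp.continuousAt.comp hcy).eventually_ne hpy,
    (hp.continuousAt.comp (hsy.add hsx)).eventually_const_lt (by simpa [hscale] using hadd),
    (hp.continuousAt.comp (hsy.sub hsx)).eventually_const_lt (by simpa [hscale] using hsub)]
    with q hxq hyq haddq hsubq
  exact ⟨map_unitScale hxq, map_unitScale hyq, haddq.le, hsubq.le⟩

lemma IsUnitReducedPair.exists_map_mul_map_le_abs_one_sub_mul (h : IsUnitReducedPair p u v)
    (hp : Continuous p) (hω : ω.IsAlt) (huv : ω u v ≠ 0) (hmin : IsAreaLowerBound p ω |ω u v|)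
    (hadd : 1 < p (v + u)) (hsub : 1 < p (v - u)) :
    ∃ ε : ℝ, 0 < ε ∧ ε < 1 ∧ ∀ s t : ℝ, |s| ≤ ε → |t| ≤ ε →
      p (u + s • v) * p (v + t • u) ≤ |1 - s * t| := by
  obtain ⟨r, hr, hball⟩ := Metric.eventually_nhds_iff_ball.1 (h.eventually_unitScale hp hadd hsub)
  refine ⟨min (r / 2) (1 / 2), by positivity,
    (min_le_right _ _).trans_lt (by norm_num), fun s t hs ht => ?_⟩
  rw [le_min_iff] at hs ht
  have harea : ω (u + s • v) (v + t • u) = (1 - s * t) * ω u v := by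
    simp only [map_add, map_smul, LinearMap.add_apply, LinearMap.smul_apply, hω.self_eq_zero,
      ← hω.neg_eq u v, smul_eq_mul]
    ring
  have hst : 0 < 1 - s * t := by
    have : |s * t| ≤ 1 / 2 * (1 / 2) := by rw [abs_mul]; gcongr; exacts [hs.2, ht.2]
    have := (abs_le.1 this).2
    linarith
  have hmem : (s, t) ∈ Metric.ball (0 : ℝ × ℝ) r := by
    rw [mem_ball_zero_iff, Prod.norm_mk, max_lt_iff, Real.norm_eq_abs, Real.norm_eq_abs]
    constructor <;> linarith
  have hle := hmin.mul_map_mul_map_le (hball (s, t) hmem)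
    (by rw [harea]; exact mul_ne_zero hst.ne' huv)
  rw [harea, abs_mul, mul_comm |1 - s * t|] at hle
  exact le_of_mul_le_mul_left hle (abs_pos.2 huv)

lemma IsUnitReducedPair.map_add_eq_one_or_map_sub_eq_one (h : IsUnitReducedPair p u v)
    (hp : Continuous p) (hω : ω.IsAlt) (huv : ω u v ≠ 0)
    (hmin : IsAreaLowerBound p ω |ω u v|) : p (u + v) = 1 ∨ p (u - v) = 1 := by
  by_contra! hne
  obtain ⟨ε, hε0, hε1, hbound⟩ := h.exists_map_mul_map_le_abs_one_sub_mul hp hω huv hmin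
    (h.one_le_add.lt_of_ne' (add_comm u v ▸ hne.1))
    (h.one_le_sub.lt_of_ne' (map_sub_rev p u v ▸ hne.2))
  have hε : |ε| = ε := abs_of_pos hε0
  have hu : 1 ≤ p (u + ε • v) := by
    have hminus : p (u - ε • v) ≤ 1 := by
      simpa [h.right, ← sub_eq_add_neg] using hbound (-ε) 0 (by simp [hε]) (by simpa using hε0.le)
    have := two_mul_map_le_map_add_add_map_sub p u (ε • v)
    linarith [h.left]
  have hv : 1 ≤ p (v + ε • u) := by
    have hminus : p (v - ε • u) ≤ 1 := by
      simpa [h.left, ← sub_eq_add_neg] using hbound 0 (-ε) (by simpa using hε0.le) (by simp [hε])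
    have := two_mul_map_le_map_add_add_map_sub p v (ε • u)
    linarith [h.right]
  have hlt : |1 - ε * ε| < 1 := abs_lt.2 ⟨by nlinarith, by nlinarith⟩
  exact absurd (hbound ε ε hε.le hε.le)
    (not_le.2 (hlt.trans_le (one_le_mul_of_one_le_of_one_le hu hv)))

lemma IsReducedPair.exists_span_pair_eq_map_eq_one (h : IsReducedPair p u v)
    (hp : Continuous p) (hω : ω.IsAlt) (hu : 1 ≤ p u) (huv : ω u v ≠ 0)
    (hmin : IsAreaLowerBound p ω |ω u v|) :
    ∃ w, span ℤ {u, w} = span ℤ {u, v} ∧ p u = 1 ∧ p w = 1 ∧ p (u + w) = 1 := by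
  have hunit := h.isUnitReducedPair_of_isAreaLowerBound hu huv hmin
  rcases hunit.map_add_eq_one_or_map_sub_eq_one hp hω huv hmin with huv1 | huv1
  · exact ⟨v, rfl, hunit.left, hunit.right, huv1⟩
  · exact ⟨-v, span_pair_neg_right u v, hunit.left, by rw [map_neg_eq_map, hunit.right],
      by rwa [← sub_eq_add_neg]⟩

end SeminormPairs

/-! ### Symmetric convex bodies -/

section SymmetricConvex

variable {G : Type*} [TopologicalSpace G] [InvolutiveNeg G] [ContinuousNeg G] {S : Set G} {x : G}

lemma neg_mem_frontier_of_eq_neg (hneg : S = -S) (hx : x ∈ frontier S) : -x ∈ frontier S := by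
  rw [hneg] at hx
  exact ((Homeomorph.neg G).preimage_frontier S).superset hx

lemma neg_mem_interior_of_eq_neg (hneg : S = -S) (hx : x ∈ interior S) : -x ∈ interior S := by
  rw [hneg] at hx
  exact ((Homeomorph.neg G).preimage_interior S).superset hx

variable {E : Type*} [AddCommGroup E] [Module ℝ E] [TopologicalSpace E] [ContinuousSMul ℝ E]
  {K : Set E}

lemma exists_seminorm_eq_gauge (hconv : Convex ℝ K) (hneg : K = -K) (hK : K ∈ 𝓝 0) :
    ∃ p : Seminorm ℝ E, ⇑p = gauge K := by
  have hbal : Balanced ℝ K :=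
    (balanced_iff_neg_mem hconv).2 fun _ hx => by rwa [hneg, Set.mem_neg, neg_neg]
  exact ⟨gaugeSeminorm hbal hconv (absorbent_nhds_zero hK), rfl⟩

variable [IsTopologicalAddGroup E]

lemma mem_nhds_zero_of_convex_of_eq_neg (hconv : Convex ℝ K) (hneg : K = -K)
    (hint : (interior K).Nonempty) : K ∈ 𝓝 0 := by
  obtain ⟨x, hx⟩ := hint
  rw [← mem_interior_iff_mem_nhds]
  simpa using hconv.interior.midpoint_mem hx (neg_mem_interior_of_eq_neg hneg hx)

end SymmetricConvex

section Admissible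

variable {n : ℕ} {K Λ : Set (Fin n → ℝ)}

lemma admissible_iff_one_le_gauge (hconv : Convex ℝ K) (hK : K ∈ 𝓝 0) (h0 : 0 ∈ Λ) :
    Admissible Λ K ↔ ∀ x ∈ Λ, x ≠ 0 → 1 ≤ gauge K x := by
  have hint (x : Fin n → ℝ) : x ∈ interior K ↔ gauge K x < 1 :=
    (gauge_lt_one_iff_mem_interior hconv hK).symm
  refine ⟨fun h x hx hx0 => not_lt.1 fun hlt => hx0 ?_, fun h => ?_⟩
  · exact h.subset ⟨hx, (hint x).2 hlt⟩
  · refine Subset.antisymm (fun x hx => ?_) ?_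
    · by_contra hx0
      exact (h x hx.1 hx0).not_gt ((hint x).1 hx.2)
    · rintro _ rfl
      exact ⟨h0, mem_interior_iff_mem_nhds.2 hK⟩

lemma IsUnitReducedPair.admissible_span {p : Seminorm ℝ (Fin n → ℝ)} {u v : Fin n → ℝ}
    (h : IsUnitReducedPair p u v) (hpK : ⇑p = gauge K) (hconv : Convex ℝ K) (hK : K ∈ 𝓝 0) :
    Admissible (span ℤ {u, v} : Set (Fin n → ℝ)) K :=
  (admissible_iff_one_le_gauge hconv hK (zero_mem _)).2 fun _ hx hx0 =>
    hpK ▸ h.one_le_map_of_mem_span hx hx0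

lemma admissible_span_of_add_mem_frontier (hconv : Convex ℝ K) (hneg : K = -K) (hK : K ∈ 𝓝 0)
    {u v : Fin n → ℝ} (hu : u ∈ frontier K) (hv : v ∈ frontier K) (huv : u + v ∈ frontier K) :
    Admissible (span ℤ {u, v} : Set (Fin n → ℝ)) K := by
  obtain ⟨p, hpK⟩ := exists_seminorm_eq_gauge hconv hneg hK
  simp only [← gauge_eq_one_iff_mem_frontier hconv hK, ← hpK] at hu hv huv
  exact (isUnitReducedPair_of_map_add_eq_one hu hv huv).admissible_span hpK hconv hK

lemma critDet_le_abs_det {A : Matrix (Fin n) (Fin n) ℝ} (hA : A.det ≠ 0)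
    (hadm : Admissible (latticeOf A) K) : critDet K ≤ |A.det| := by
  refine csInf_le ⟨0, ?_⟩ ⟨A, hA, hadm, rfl⟩
  rintro _ ⟨B, -, -, rfl⟩
  exact abs_nonneg _

lemma latticeOf_eq_span_range_col (A : Matrix (Fin n) (Fin n) ℝ) :
    latticeOf A = span ℤ (range A.col) := by
  ext x
  simp only [latticeOf, SetLike.mem_coe, mem_span_range_iff_exists_fun, mem_range,
    mulVec_eq_sum, op_smul_eq_smul, Int.cast_smul_eq_zsmul]
  rfl

lemma finite_inter_latticeOf {A : Matrix (Fin n) (Fin n) ℝ} (hA : A.det ≠ 0)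
    {s : Set (Fin n → ℝ)} (hs : Bornology.IsBounded s) : (s ∩ latticeOf A).Finite := by
  classical
  have := ZSpan.setFinite_inter
    (basisOfPiSpaceOfLinearIndependent (linearIndependent_cols_of_det_ne_zero hA)) hs
  rwa [coe_basisOfPiSpaceOfLinearIndependent, ← latticeOf_eq_span_range_col] at this

lemma finite_setOf_mem_latticeOf_gauge_le {A : Matrix (Fin n) (Fin n) ℝ} (hA : A.det ≠ 0)
    (hK : K ∈ 𝓝 0) (hbdd : Bornology.IsBounded K) (c : ℝ) :
    {x ∈ latticeOf A | gauge K x ≤ c}.Finite := by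
  obtain ⟨r, hr, hKr⟩ := hbdd.subset_closedBall_lt 0 0
  refine (finite_inter_latticeOf hA (Metric.isBounded_closedBall (x := 0) (r := c * r))).subset ?_
  rintro x ⟨hx, hxc⟩
  have hle := (le_gauge_of_subset_closedBall (absorbent_nhds_zero hK) hr.le hKr).trans hxc
  exact ⟨mem_closedBall_zero_iff.2 ((div_le_iff₀ hr).1 hle), hx⟩

end Admissible

/-! ### The plane -/

/-- The signed area of the parallelogram spanned by two plane vectors. -/
def planarArea : LinearMap.BilinForm ℝ (Fin 2 → ℝ) :=
  LinearMap.mk₂ ℝ (fun x y => x 0 * y 1 - x 1 * y 0)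
    (fun _ _ _ => by simp only [Pi.add_apply]; ring)
    (fun _ _ _ => by simp only [Pi.smul_apply, smul_eq_mul]; ring)
    (fun _ _ _ => by simp only [Pi.add_apply]; ring)
    (fun _ _ _ => by simp only [Pi.smul_apply, smul_eq_mul]; ring)

lemma planarArea_apply (x y : Fin 2 → ℝ) : planarArea x y = x 0 * y 1 - x 1 * y 0 := rfl

lemma planarArea_isAlt : planarArea.IsAlt := fun x => by
  rw [planarArea_apply, mul_comm, sub_self]

lemma det_eq_planarArea (A : Matrix (Fin 2) (Fin 2) ℝ) :
    A.det = planarArea (A.col 0) (A.col 1) := by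
  simp only [det_fin_two, planarArea_apply, col_apply]
  ring

lemma latticeOf_eq_span_pair (A : Matrix (Fin 2) (Fin 2) ℝ) :
    latticeOf A = span ℤ {A.col 0, A.col 1} := by
  rw [latticeOf_eq_span_range_col]
  congr 2
  ext x
  simp [Fin.exists_fin_two, eq_comm]

lemma range_intCast_smul_add_eq_span {E : Type*} [AddCommGroup E] [Module ℝ E] (u v : E) :
    (range fun mn : ℤ × ℤ => (mn.1 : ℝ) • u + (mn.2 : ℝ) • v) = span ℤ {u, v} := by
  ext x
  simp [mem_span_pair, Int.cast_smul_eq_zsmul]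

lemma isLatticeBasis_iff_eq_span {u v : Fin 2 → ℝ} {Λ : Set (Fin 2 → ℝ)} :
    IsLatticeBasis u v Λ ↔ Λ = span ℤ {u, v} := by
  rw [IsLatticeBasis, range_intCast_smul_add_eq_span]

namespace IsLatticeBasis

variable {u v : Fin 2 → ℝ} {Λ : Set (Fin 2 → ℝ)}

lemma swap (h : IsLatticeBasis u v Λ) : IsLatticeBasis v u Λ := by
  rwa [isLatticeBasis_iff_eq_span, pair_comm, ← isLatticeBasis_iff_eq_span]

lemma add_left (h : IsLatticeBasis u v Λ) : IsLatticeBasis u (u + v) Λ := by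
  rw [isLatticeBasis_iff_eq_span] at h ⊢
  rw [h, ← span_pair_add_smul_left u v 1, one_smul, add_comm]

lemma left_mem (h : IsLatticeBasis u v Λ) : u ∈ Λ := by
  rw [isLatticeBasis_iff_eq_span.1 h]
  exact subset_span (by simp)

lemma neg_mem (h : IsLatticeBasis u v Λ) {x : Fin 2 → ℝ} (hx : x ∈ Λ) : -x ∈ Λ := by
  rw [isLatticeBasis_iff_eq_span.1 h] at hx ⊢
  exact Submodule.neg_mem _ hx

end IsLatticeBasis

section PlanarBody

variable {K : Set (Fin 2 → ℝ)}

lemma isAreaLowerBound_critDet {p : Seminorm ℝ (Fin 2 → ℝ)} (hpK : ⇑p = gauge K)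
    (hconv : Convex ℝ K) (hK : K ∈ 𝓝 0) :
    IsAreaLowerBound p planarArea (critDet K) := by
  intro a b hab h0
  let B : Matrix (Fin 2) (Fin 2) ℝ := (Matrix.of ![a, b])ᵀ
  have hdet : B.det = planarArea a b := det_eq_planarArea B
  have hlattice : latticeOf B = span ℤ {a, b} := latticeOf_eq_span_pair B
  rw [← hdet] at h0 ⊢
  exact critDet_le_abs_det h0 (hlattice ▸ hab.admissible_span hpK hconv hK)

lemma exists_isLatticeBasis_mem_frontier (hconv : Convex ℝ K) (hneg : K = -K) (hK : K ∈ 𝓝 0)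
    (hbdd : Bornology.IsBounded K) {A : Matrix (Fin 2) (Fin 2) ℝ} (hA : A.det ≠ 0)
    (hadm : Admissible (latticeOf A) K) (hcrit : |A.det| = critDet K) :
    ∃ u v, IsLatticeBasis u v (latticeOf A) ∧
      u ∈ frontier K ∧ v ∈ frontier K ∧ u + v ∈ frontier K := by
  obtain ⟨p, hpK⟩ := exists_seminorm_eq_gauge hconv hneg hK
  have hspan := latticeOf_eq_span_pair A
  have hfin (c : ℝ) :
      {x ∈ (span ℤ {A.col 0, A.col 1} : Set (Fin 2 → ℝ)) | p x ≤ c}.Finite := by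
    rw [← hspan, hpK]
    exact finite_setOf_mem_latticeOf_gauge_le hA hK hbdd c
  obtain ⟨u, v, huvspan, hred⟩ := exists_isReducedPair_span_eq rfl hfin
  have harea : |planarArea u v| = |A.det| := by
    rw [det_eq_planarArea] at hA ⊢
    exact abs_eq_abs_of_span_pair_eq planarArea_isAlt huvspan hA
  have huv : planarArea u v ≠ 0 := abs_pos.1 (harea ▸ abs_pos.2 hA)
  have hu : 1 ≤ p u := by
    rw [hspan, ← huvspan] at hadm
    rw [hpK]
    refine (admissible_iff_one_le_gauge hconv hK (zero_mem _)).1 hadm u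
      (subset_span (by simp)) ?_
    rintro rfl
    simp at huv
  obtain ⟨w, hw, hu1, hw1, huw1⟩ := hred.exists_span_pair_eq_map_eq_one
    (hpK ▸ continuous_gauge hconv hK) planarArea_isAlt hu huv
    (harea ▸ hcrit ▸ isAreaLowerBound_critDet hpK hconv hK)
  simp only [hpK, gauge_eq_one_iff_mem_frontier hconv hK] at hu1 hw1 huw1
  exact ⟨u, w, isLatticeBasis_iff_eq_span.2 (by rw [hspan, hw, huvspan]), hu1, hw1, huw1⟩

end PlanarBody

/-- Let `K ⊆ ℝ²` be a centrally symmetric convex body and `Λ` a `K`-critical lattice.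
Then three pairs of lattice points `±p₁, ±p₂, ±p₃` lie on `∂K`, which can be chosen so
that `p₁ + p₂ = p₃` and any two of `p₁, p₂, p₃` form a basis of `Λ`.  Conversely, for any
points `p₁, p₂, p₃ ∈ ∂K` with `p₁ + p₂ = p₃`, the lattice generated by `p₁, p₂` is
`K`-admissible. -/
theorem critical_lattice_structure (K : Set (Fin 2 → ℝ))
    (hKc : IsCompact K) (hKconv : Convex ℝ K) (hKint : (interior K).Nonempty)
    (hsymm : K = -K)
    (A : Matrix (Fin 2) (Fin 2) ℝ) (hA : A.det ≠ 0)
    (hadm : Admissible (latticeOf A) K) (hcrit : |A.det| = critDet K) :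
    (∃ p₁ p₂ p₃ : Fin 2 → ℝ,
      (p₁ ∈ latticeOf A ∧ p₁ ∈ frontier K ∧ -p₁ ∈ latticeOf A ∧ -p₁ ∈ frontier K) ∧
      (p₂ ∈ latticeOf A ∧ p₂ ∈ frontier K ∧ -p₂ ∈ latticeOf A ∧ -p₂ ∈ frontier K) ∧
      (p₃ ∈ latticeOf A ∧ p₃ ∈ frontier K ∧ -p₃ ∈ latticeOf A ∧ -p₃ ∈ frontier K) ∧
      p₁ + p₂ = p₃ ∧
      IsLatticeBasis p₁ p₂ (latticeOf A) ∧ IsLatticeBasis p₁ p₃ (latticeOf A) ∧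
      IsLatticeBasis p₂ p₃ (latticeOf A)) ∧
    (∀ p₁ p₂ p₃ : Fin 2 → ℝ, p₁ ∈ frontier K → p₂ ∈ frontier K → p₃ ∈ frontier K →
      p₁ + p₂ = p₃ →
      Admissible (Set.range fun mn : ℤ × ℤ => (mn.1 : ℝ) • p₁ + (mn.2 : ℝ) • p₂) K) := by
  have hK : K ∈ 𝓝 0 := mem_nhds_zero_of_convex_of_eq_neg hKconv hsymm hKint
  constructor
  · obtain ⟨u, v, huv, hu, hv, hadd⟩ :=
      exists_isLatticeBasis_mem_frontier hKconv hsymm hK hKc.isBounded hA hadm hcrit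
    have hleft : IsLatticeBasis u (u + v) (latticeOf A) := huv.add_left
    have hright : IsLatticeBasis v (u + v) (latticeOf A) := add_comm v u ▸ huv.swap.add_left
    have hpair {x y : Fin 2 → ℝ} (hxy : IsLatticeBasis x y (latticeOf A)) (hx : x ∈ frontier K) :
        x ∈ latticeOf A ∧ x ∈ frontier K ∧ -x ∈ latticeOf A ∧ -x ∈ frontier K :=
      ⟨hxy.left_mem, hx, hxy.neg_mem hxy.left_mem, neg_mem_frontier_of_eq_neg hsymm hx⟩
    exact ⟨u, v, u + v, hpair huv hu, hpair huv.swap hv, hpair hleft.swap hadd, rfl, huv, hleft,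
      hright⟩
  · rintro u v _ hu hv huv rfl
    rw [range_intCast_smul_add_eq_span]
    exact admissible_span_of_add_mem_frontier hKconv hsymm hK hu hv huv
end
end

section
/- For the triangle T = conv{(0,0), (1,1/2), (1/2,1)} in ℝ², one has d_{2,1}(T) = 3/8 and ℤ² is a *critical lattice for T, i.e., ℤ² + T is non-separable and d(ℤ²) = Δ*(T). -/
open MeasureTheory Set Matrix Pointwise

noncomputable section

/-- The integer lattice `ℤⁿ ⊆ ℝⁿ`. -/
def intLattice (n : ℕ) : Set (Fin n → ℝ) :=
  Set.range fun m : Fin n → ℤ => fun i => (m i : ℝ)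

/-- The *critical determinant `Δ*(K)`: the largest determinant of a lattice `Λ`
with `Λ + K` non-separable. -/
def starCritDet {n : ℕ} (K : Set (Fin n → ℝ)) : ℝ :=
  sSup {d : ℝ | ∃ A : Matrix (Fin n) (Fin n) ℝ, A.det ≠ 0 ∧
    NonSeparable (latticeOf A) K ∧ d = |A.det|}

/-!
A nonzero `u` in the dual lattice takes integer values on `Λ`, so if `K` has width less than `1` in
direction `u` then some hyperplane orthogonal to `u` misses all of `Λ + K`. These directions form
the strict polar of the difference body `K - K`, a symmetric convex set, and by Minkowski's theorem
it contains a nonzero dual lattice vector as soon as its volume exceeds `2ⁿ / d(Λ)`. Hence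
`d(Λ) · |(K - K)°| ≤ 2ⁿ` when `Λ + K` is non-separable. For a triangle `conv {0, a, b}` the polar
is a linear image of a hexagon of area `3`, which gives `d(Λ) ≤ 4/3 · |det (a, b)|`, equal to `1`
for `T`.

The lattice `ℤ²` attains the bound: for every `u ≠ 0` there are a coordinate `u i ≠ 0` and an edge
`E` of `T` such that `|u i|` is at most the length of the interval `⟨u, E⟩`, so the translates of
`E` by integer multiples of `eᵢ` already meet every line `⟨u, y⟩ = c`.
-/

section IntegerLattice

variable {ι : Type*} [Fintype ι]

lemma exists_intCast_ne_zero_mem_of_two_pow_lt_volume {S : Set (ι → ℝ)}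
    (hsymm : ∀ x ∈ S, -x ∈ S) (hconv : Convex ℝ S) (hvol : 2 ^ Fintype.card ι < volume S) :
    ∃ m : ι → ℤ, m ≠ 0 ∧ (fun i => (m i : ℝ)) ∈ S := by
  classical
  let b := Pi.basisFun ℝ ι
  have hcovol : volume (ZSpan.fundamentalDomain b) = 1 := by
    simp [b, ZSpan.fundamentalDomain_pi_basisFun, Real.volume_pi_Ico]
  have : Countable (Submodule.span ℤ (range b)).toAddSubgroup :=
    inferInstanceAs (Countable (Submodule.span ℤ (range b)))
  obtain ⟨⟨x, hxL⟩, hx0, hxS⟩ := exists_ne_zero_mem_lattice_of_measure_mul_two_pow_lt_measure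
    (ZSpan.isAddFundamentalDomain' b volume) hsymm hconv
    (by rwa [hcovol, one_mul, Module.finrank_fintype_fun_eq_card])
  choose m hm using (b.mem_span_iff_repr_mem ℤ x).mp hxL
  obtain rfl : (fun i => (m i : ℝ)) = x := funext fun i => by simpa [b] using hm i
  refine ⟨m, ?_, hxS⟩
  rintro rfl
  exact hx0 (Subtype.ext (funext fun i => by simp))

lemma exists_mulVec_intCast_mem_of_two_pow_mul_abs_det_lt_volume [DecidableEq ι]
    {B : Matrix ι ι ℝ} (hB : B.det ≠ 0) {S : Set (ι → ℝ)}
    (hsymm : ∀ x ∈ S, -x ∈ S) (hconv : Convex ℝ S)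
    (hvol : 2 ^ Fintype.card ι * ENNReal.ofReal |B.det| < volume S) :
    ∃ m : ι → ℤ, m ≠ 0 ∧ B *ᵥ (fun i => (m i : ℝ)) ∈ S := by
  have hdet : LinearMap.det (toLin' B) ≠ 0 := by rwa [LinearMap.det_toLin']
  refine exists_intCast_ne_zero_mem_of_two_pow_lt_volume (S := toLin' B ⁻¹' S)
    (fun x hx => by simpa [mulVec_neg] using hsymm _ hx) (hconv.linear_preimage _) ?_
  rwa [Measure.addHaar_preimage_linearMap _ hdet, LinearMap.det_toLin', abs_inv,
    ENNReal.ofReal_inv_of_pos (abs_pos.mpr hB), mul_comm, ← div_eq_mul_inv,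
    ENNReal.lt_div_iff_mul_lt (by simp [hB]) (by simp)]

lemma exists_int_transpose_inv_mulVec_dotProduct_mulVec [DecidableEq ι] {A : Matrix ι ι ℝ}
    (hA : A.det ≠ 0) (m k : ι → ℤ) :
    ∃ j : ℤ, (Aᵀ⁻¹ *ᵥ fun i => (m i : ℝ)) ⬝ᵥ (A *ᵥ fun i => (k i : ℝ)) = j := by
  refine ⟨m ⬝ᵥ k, ?_⟩
  rw [dotProduct_mulVec, ← mulVec_transpose, mulVec_mulVec, mul_nonsing_inv _ (by simpa using hA),
    one_mulVec]
  simp [dotProduct]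

lemma latticeOf_one (n : ℕ) : latticeOf (1 : Matrix (Fin n) (Fin n) ℝ) = intLattice n := by
  simp [latticeOf, intLattice]

end IntegerLattice

section StrictPolar

variable {ι : Type*} [Fintype ι]

/-- The strict polar `{u | ⟨u, x⟩ < 1 for all x ∈ s}` of a set `s`. For compact `K`, the strict
polar of the difference body `K - K` consists of the `u` for which `K` has width less than `1`
in direction `u`. -/
def strictPolar (s : Set (ι → ℝ)) : Set (ι → ℝ) :=
  {u | ∀ x ∈ s, u ⬝ᵥ x < 1}

lemma convex_strictPolar (s : Set (ι → ℝ)) : Convex ℝ (strictPolar s) := by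
  have hinter : strictPolar s = ⋂ x ∈ s, {u | u ⬝ᵥ x < 1} := by ext; simp [strictPolar]
  rw [hinter]
  exact convex_iInter₂ fun x _ => convex_halfSpace_lt
    ⟨fun u v => add_dotProduct u v x, fun c u => smul_dotProduct c u x⟩ 1

lemma mem_strictPolar_sub {K L : Set (ι → ℝ)} {u : ι → ℝ} :
    u ∈ strictPolar (K - L) ↔ ∀ x ∈ K, ∀ y ∈ L, u ⬝ᵥ x - u ⬝ᵥ y < 1 := by
  simp only [← dotProduct_sub]
  exact forall_mem_image2

lemma neg_mem_strictPolar_sub_self {K : Set (ι → ℝ)} {u : ι → ℝ}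
    (hu : u ∈ strictPolar (K - K)) : -u ∈ strictPolar (K - K) := by
  rw [mem_strictPolar_sub] at hu ⊢
  intro x hx y hy
  simpa only [neg_dotProduct, neg_sub_neg] using hu y hy x hx

lemma strictPolar_convexHull (s : Set (ι → ℝ)) :
    strictPolar (convexHull ℝ s) = strictPolar s := by
  refine Subset.antisymm (fun u hu x hx => hu x (subset_convexHull ℝ s hx)) fun u hu => ?_
  exact convexHull_min hu (convex_halfSpace_lt
    ⟨fun x y => dotProduct_add u x y, fun c x => dotProduct_smul c u x⟩ 1)

end StrictPolar

section NonSeparable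

variable {n : ℕ} {K : Set (Fin n → ℝ)}

/-- The hyperplane `⟨u, y⟩ = c` with `c` half-way between `max ⟨u, K⟩` and `1 + min ⟨u, K⟩` passes
through the gap between consecutive layers of translates. -/
lemma NonSeparable.notMem_strictPolar_sub_self {Λ : Set (Fin n → ℝ)} (h : NonSeparable Λ K)
    (hK : IsCompact K) {u : Fin n → ℝ} (hu : u ≠ 0) (hdual : ∀ x ∈ Λ, ∃ k : ℤ, u ⬝ᵥ x = k) :
    u ∉ strictPolar (K - K) := by
  intro hpolar
  have hcont : ContinuousOn (u ⬝ᵥ ·) K := by fun_prop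
  have hne : K.Nonempty := let ⟨_, _, y, hy, _⟩ := h u hu 0; ⟨y, hy⟩
  obtain ⟨p, hp, hmin⟩ := hK.exists_isMinOn hne hcont
  obtain ⟨q, hq, hmax⟩ := hK.exists_isMaxOn hne hcont
  have hwidth : u ⬝ᵥ q - u ⬝ᵥ p < 1 := mem_strictPolar_sub.mp hpolar q hq p hp
  obtain ⟨x, hx, y, hy, hxy⟩ := h u hu ((u ⬝ᵥ p + u ⬝ᵥ q + 1) / 2)
  obtain ⟨k, hk⟩ := hdual x hx
  have hpy : u ⬝ᵥ p ≤ u ⬝ᵥ y := hmin hy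
  have hyq : u ⬝ᵥ y ≤ u ⬝ᵥ q := hmax hy
  rw [dotProduct_add, hk] at hxy
  have hk_pos : (0 : ℝ) < k := by linarith
  have hk_lt : (k : ℝ) < 1 := by linarith
  norm_cast at hk_pos hk_lt
  lia

theorem NonSeparable.abs_det_mul_volume_strictPolar_le {A : Matrix (Fin n) (Fin n) ℝ}
    (h : NonSeparable (latticeOf A) K) (hA : A.det ≠ 0) (hK : IsCompact K) :
    ENNReal.ofReal |A.det| * volume (strictPolar (K - K)) ≤ 2 ^ n := by
  by_contra! hlt
  have hB : Aᵀ⁻¹.det ≠ 0 := by simpa [det_nonsing_inv] using hA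
  have hvol : 2 ^ Fintype.card (Fin n) * ENNReal.ofReal |Aᵀ⁻¹.det|
      < volume (strictPolar (K - K)) := by
    rw [Fintype.card_fin, det_nonsing_inv, det_transpose, Ring.inverse_eq_inv, abs_inv,
      ENNReal.ofReal_inv_of_pos (abs_pos.mpr hA), ← div_eq_mul_inv]
    exact ENNReal.div_lt_of_lt_mul' hlt
  obtain ⟨m, hm, hmem⟩ := exists_mulVec_intCast_mem_of_two_pow_mul_abs_det_lt_volume hB
    (fun _ => neg_mem_strictPolar_sub_self) (convex_strictPolar _) hvol
  refine h.notMem_strictPolar_sub_self hK (fun h0 => hm ?_) ?_ hmem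
  · have hm0 := eq_zero_of_mulVec_eq_zero hB h0
    exact funext fun i => by simpa using congrFun hm0 i
  · rintro _ ⟨k, rfl⟩
    exact exists_int_transpose_inv_mulVec_dotProduct_mulVec hA m k

lemma exists_zsmul_dotProduct_add_eq_of_abs_le {ι : Type*} [Fintype ι] {K : Set (ι → ℝ)}
    (hK : Convex ℝ K) {u x v w : ι → ℝ} (hv : v ∈ K) (hw : w ∈ K) (hux : u ⬝ᵥ x ≠ 0)
    (hle : |u ⬝ᵥ x| ≤ |u ⬝ᵥ w - u ⬝ᵥ v|) (c : ℝ) :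
    ∃ k : ℤ, ∃ y ∈ K, u ⬝ᵥ (k • x + y) = c := by
  obtain ⟨k, hk, -⟩ := existsUnique_sub_zsmul_mem_Ico (abs_pos.mpr hux) c (min (u ⬝ᵥ v) (u ⬝ᵥ w))
  have hseg : c - k • |u ⬝ᵥ x| ∈ (dotProductBilin ℝ ℝ u).toAffineMap '' segment ℝ v w := by
    rw [image_segment, segment_eq_uIcc]
    refine ⟨hk.1, hk.2.le.trans ?_⟩
    change min (u ⬝ᵥ v) (u ⬝ᵥ w) + |u ⬝ᵥ x| ≤ max (u ⬝ᵥ v) (u ⬝ᵥ w)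
    linarith [max_sub_min_eq_abs (u ⬝ᵥ v) (u ⬝ᵥ w)]
  obtain ⟨y, hy, hyc : u ⬝ᵥ y = c - k • |u ⬝ᵥ x|⟩ := hseg
  obtain ⟨j, hj⟩ : ∃ j : ℤ, j • (u ⬝ᵥ x) = k • |u ⬝ᵥ x| := by
    rcases abs_choice (u ⬝ᵥ x) with habs | habs
    · exact ⟨k, by rw [habs]⟩
    · exact ⟨-k, by rw [habs, neg_smul, smul_neg]⟩
  refine ⟨j, y, hK.segment_subset hv hw hy, ?_⟩
  rw [dotProduct_add, dotProduct_smul, hj, hyc, add_sub_cancel]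

end NonSeparable

section Critical

variable {n : ℕ} {A : Matrix (Fin n) (Fin n) ℝ} {K : Set (Fin n → ℝ)}

/-- The lattice `A · ℤⁿ` is `K`-*critical: it has the largest determinant among the lattices `Λ`
with `Λ + K` non-separable. Maximality is stated directly, so that it does not depend on the value
that `starCritDet` takes when the supremum is not attained. -/
structure IsStarCritical (A : Matrix (Fin n) (Fin n) ℝ) (K : Set (Fin n → ℝ)) : Prop where
  det_ne_zero : A.det ≠ 0
  nonSeparable : NonSeparable (latticeOf A) K
  abs_det_le : ∀ B : Matrix (Fin n) (Fin n) ℝ, B.det ≠ 0 → NonSeparable (latticeOf B) K →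
    |B.det| ≤ |A.det|

lemma IsStarCritical.starCritDet_eq (h : IsStarCritical A K) : starCritDet K = |A.det| := by
  refine IsGreatest.csSup_eq ⟨⟨A, h.det_ne_zero, h.nonSeparable, rfl⟩, ?_⟩
  rintro _ ⟨B, hB, hns, rfl⟩
  exact h.abs_det_le B hB hns

lemma IsStarCritical.dTrans_eq (h : IsStarCritical A K) :
    dTrans K = (volume K).toReal / |A.det| := by
  refine IsLeast.csInf_eq ⟨⟨A, h.det_ne_zero, h.nonSeparable, rfl⟩, ?_⟩
  rintro _ ⟨B, hB, hns, rfl⟩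
  exact div_le_div_of_nonneg_left ENNReal.toReal_nonneg (abs_pos.mpr hB) (h.abs_det_le B hB hns)

end Critical

section PlanarArea

lemma volume_eq_ofReal_setIntegral_of_slices {S : Set (Fin 2 → ℝ)} (hS : MeasurableSet S)
    {I : Set ℝ} (hI : MeasurableSet I) {len : ℝ → ℝ} (hint : IntegrableOn len I)
    (hnonneg : ∀ x ∈ I, 0 ≤ len x)
    (hmem : ∀ x ∈ I, volume {y | ![x, y] ∈ S} = ENNReal.ofReal (len x))
    (hnotMem : ∀ x ∉ I, {y | ![x, y] ∈ S} = ∅) :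
    volume S = ENNReal.ofReal (∫ x in I, len x) := by
  have hslice (x : ℝ) : volume {y | ![x, y] ∈ S} =
      I.indicator (fun x => ENNReal.ofReal (len x)) x := by
    by_cases hx : x ∈ I
    · rw [indicator_of_mem hx, hmem x hx]
    · rw [indicator_of_notMem hx, hnotMem x hx, measure_empty]
  have hpres := (volume_preserving_finTwoArrow ℝ).symm
  calc volume S
    _ = ∫⁻ x, volume {y | ![x, y] ∈ S} := by
      rw [← hpres.measure_preimage hS.nullMeasurableSet, Measure.volume_eq_prod,
        Measure.prod_apply (hpres.measurable hS)]
      rfl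
    _ = ∫⁻ x in I, ENNReal.ofReal (len x) := by
      rw [lintegral_congr hslice, lintegral_indicator hI]
    _ = ENNReal.ofReal (∫ x in I, len x) :=
      (ofReal_integral_eq_lintegral_ofReal hint
        ((ae_restrict_iff' hI).mpr (.of_forall hnonneg))).symm

/-- The triangle with vertices `0`, `e₁`, `e₂`; every triangle with a vertex at the origin is a
linear image of it. -/
def cornerTriangle : Set (Fin 2 → ℝ) :=
  {v | 0 ≤ v 0 ∧ 0 ≤ v 1 ∧ v 0 + v 1 ≤ 1}

lemma volume_cornerTriangle : volume cornerTriangle = ENNReal.ofReal (1 / 2) := by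
  have hmeas : MeasurableSet cornerTriangle := by
    unfold cornerTriangle
    measurability
  have hslice (x : ℝ) (hx : 0 ≤ x) : {y | ![x, y] ∈ cornerTriangle} = Icc 0 (1 - x) := by
    ext y
    simp [cornerTriangle, hx, le_sub_iff_add_le']
  rw [volume_eq_ofReal_setIntegral_of_slices hmeas measurableSet_Icc
    (len := fun x => 1 - x) (I := Icc 0 1)]
  · rw [integral_Icc_eq_integral_Ioc, ← intervalIntegral.integral_of_le zero_le_one,
      intervalIntegral.integral_sub (by simp) (by simp)]
    norm_num
  · exact Continuous.integrableOn_Icc (by fun_prop)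
  · exact fun x hx => sub_nonneg.mpr hx.2
  · intro x hx
    rw [hslice x hx.1, Real.volume_Icc, sub_zero]
  · intro x hx
    refine eq_empty_of_forall_notMem fun y hy => hx ?_
    obtain ⟨hx0, hy0, hxy⟩ : 0 ≤ x ∧ 0 ≤ y ∧ x + y ≤ 1 := hy
    exact ⟨hx0, by linarith⟩

lemma convex_cornerTriangle : Convex ℝ cornerTriangle := by
  rintro x ⟨hx0, hx1, hx⟩ y ⟨hy0, hy1, hy⟩ s t hs ht hst
  simp only [cornerTriangle, mem_ofPred_eq, Pi.add_apply, Pi.smul_apply, smul_eq_mul]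
  exact ⟨by positivity, by positivity, by nlinarith⟩

lemma convexHull_zero_pair_eq_image_cornerTriangle (a b : Fin 2 → ℝ) :
    convexHull ℝ {0, a, b} = toLin' (of ![a, b])ᵀ '' cornerTriangle := by
  have hmap (v : Fin 2 → ℝ) : toLin' (of ![a, b])ᵀ v = v 0 • a + v 1 • b := by
    ext i
    simp [mulVec, dotProduct, mul_comm]
  apply Subset.antisymm
  · refine convexHull_min ?_ (convex_cornerTriangle.linear_image _)
    rintro _ (rfl | rfl | rfl)
    · exact ⟨0, by simp [cornerTriangle], by simp⟩
    · exact ⟨![1, 0], by simp [cornerTriangle], by simp [hmap]⟩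
    · exact ⟨![0, 1], by simp [cornerTriangle], by simp [hmap]⟩
  · rintro _ ⟨v, ⟨hv0, hv1, hv⟩, rfl⟩
    have hmem := (convex_convexHull ℝ {0, a, b}).sum_mem (t := Finset.univ)
      (w := ![1 - v 0 - v 1, v 0, v 1]) (z := ![0, a, b])
      (by simpa [Fin.forall_fin_succ, hv0, hv1, le_sub_iff_add_le, add_comm] using hv)
      (by simp [Fin.sum_univ_three, sub_sub, add_assoc])
      (fun i _ => subset_convexHull ℝ _ (by fin_cases i <;> simp))
    simpa [hmap, Fin.sum_univ_three] using hmem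

lemma volume_convexHull_zero_pair (a b : Fin 2 → ℝ) :
    volume (convexHull ℝ {0, a, b}) = ENNReal.ofReal (|(of ![a, b]).det| / 2) := by
  rw [convexHull_zero_pair_eq_image_cornerTriangle, Measure.addHaar_image_linearMap,
    LinearMap.det_toLin', det_transpose, volume_cornerTriangle, ← ENNReal.ofReal_mul (abs_nonneg _),
    mul_one_div]

/-- The strict polar of the difference body of `cornerTriangle`. -/
def hexagon : Set (Fin 2 → ℝ) :=
  {v | |v 0| < 1 ∧ |v 1| < 1 ∧ |v 0 - v 1| < 1}

lemma integral_abs_neg_one_one : ∫ x in (-1 : ℝ)..1, |x| = 1 := by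
  have hneg : ∫ x in (-1 : ℝ)..0, |x| = ∫ x in (-1 : ℝ)..0, -x :=
    intervalIntegral.integral_congr fun x hx => abs_of_nonpos (by simp_all)
  have hpos : ∫ x in (0 : ℝ)..1, |x| = ∫ x in (0 : ℝ)..1, x :=
    intervalIntegral.integral_congr fun x hx => abs_of_nonneg (by simp_all)
  rw [← intervalIntegral.integral_add_adjacent_intervals (b := 0)
    (continuous_abs.intervalIntegrable _ _) (continuous_abs.intervalIntegrable _ _), hneg, hpos,
    intervalIntegral.integral_neg]
  norm_num

lemma volume_hexagon : volume hexagon = 3 := by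
  have hmeas : MeasurableSet hexagon := by
    unfold hexagon
    measurability
  have hslice (x : ℝ) (hx : |x| < 1) :
      {y | ![x, y] ∈ hexagon} = Ioo (max (-1) (x - 1)) (min 1 (x + 1)) := by
    ext y
    simp only [hexagon, mem_ofPred_eq, cons_val_zero, cons_val_one, mem_Ioo, max_lt_iff, lt_min_iff]
    grind
  have hlen (x : ℝ) : min 1 (x + 1) - max (-1) (x - 1) = 2 - |x| := by grind
  rw [volume_eq_ofReal_setIntegral_of_slices hmeas measurableSet_Ioo
    (len := fun x => 2 - |x|) (I := Ioo (-1) 1)]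
  · rw [← integral_Ioc_eq_integral_Ioo, ← intervalIntegral.integral_of_le (by norm_num),
      intervalIntegral.integral_sub (by simp) (Continuous.intervalIntegrable (by fun_prop) _ _),
      integral_abs_neg_one_one]
    norm_num
  · exact (Continuous.integrableOn_Icc (by fun_prop)).mono_set Ioo_subset_Icc_self
  · exact fun x hx => by linarith [abs_lt.mpr hx]
  · intro x hx
    rw [hslice x (abs_lt.mpr hx), Real.volume_Ioo, hlen]
  · exact fun x hx => eq_empty_of_forall_notMem fun y hy => hx (abs_lt.mp hy.1)

lemma strictPolar_sub_self_convexHull_zero_pair (a b : Fin 2 → ℝ) :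
    strictPolar (convexHull ℝ {0, a, b} - convexHull ℝ {0, a, b}) =
      toLin' (of ![a, b]) ⁻¹' hexagon := by
  rw [← convexHull_sub, strictPolar_convexHull]
  ext u
  have hmap : of ![a, b] *ᵥ u = ![u ⬝ᵥ a, u ⬝ᵥ b] := by
    ext i
    fin_cases i <;> simp [mulVec, dotProduct_comm]
  simp only [mem_preimage, toLin'_apply, hmap, mem_strictPolar_sub, hexagon, mem_ofPred_eq,
    cons_val_zero, cons_val_one, forall_mem_insert, mem_singleton_iff, forall_eq, dotProduct_zero]
  grind

lemma volume_strictPolar_sub_self_convexHull_zero_pair {a b : Fin 2 → ℝ}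
    (hab : (of ![a, b]).det ≠ 0) :
    volume (strictPolar (convexHull ℝ {0, a, b} - convexHull ℝ {0, a, b})) =
      ENNReal.ofReal (3 / |(of ![a, b]).det|) := by
  rw [strictPolar_sub_self_convexHull_zero_pair,
    Measure.addHaar_preimage_linearMap _ (by rwa [LinearMap.det_toLin']), LinearMap.det_toLin',
    volume_hexagon, abs_inv, div_eq_inv_mul, ENNReal.ofReal_mul (by positivity),
    ENNReal.ofReal_ofNat]

end PlanarArea

section Triangle

theorem NonSeparable.abs_det_le_of_convexHull_zero_pair {A : Matrix (Fin 2) (Fin 2) ℝ}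
    (hA : A.det ≠ 0) {a b : Fin 2 → ℝ} (hab : (of ![a, b]).det ≠ 0)
    (h : NonSeparable (latticeOf A) (convexHull ℝ {0, a, b})) :
    |A.det| ≤ 4 / 3 * |(of ![a, b]).det| := by
  have hcompact : IsCompact (convexHull ℝ {0, a, b}) := (toFinite _).isCompact_convexHull ℝ
  have hle := h.abs_det_mul_volume_strictPolar_le hA hcompact
  have hpos : 0 < |(of ![a, b]).det| := abs_pos.mpr hab
  rw [volume_strictPolar_sub_self_convexHull_zero_pair hab, ← ENNReal.ofReal_mul (abs_nonneg _),
    ← ENNReal.ofReal_ofNat 2, ← ENNReal.ofReal_pow zero_le_two,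
    ENNReal.ofReal_le_ofReal_iff (by positivity), ← mul_div_assoc, div_le_iff₀ hpos] at hle
  linarith

/-- The triangle with vertices `(0, 0)`, `(1, 1/2)` and `(1/2, 1)`, for which `ℤ²` is *critical. -/
def triangle : Set (Fin 2 → ℝ) :=
  convexHull ℝ {0, ![1, 1/2], ![1/2, 1]}

lemma volume_triangle : volume triangle = ENNReal.ofReal (3 / 8) := by
  rw [triangle, volume_convexHull_zero_pair, det_fin_two]
  norm_num

/-- If `u 0` and `u 1` have opposite signs, the edge from `(1, 1/2)` to `(1/2, 1)` is long enough
for the smaller of them; otherwise one of the edges at the origin is. -/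
lemma exists_abs_apply_le_abs_dotProduct_sub {u : Fin 2 → ℝ} (hu : u ≠ 0) :
    ∃ i, u i ≠ 0 ∧ ∃ v ∈ triangle, ∃ w ∈ triangle, |u i| ≤ |u ⬝ᵥ w - u ⬝ᵥ v| := by
  have hvertex {v : Fin 2 → ℝ} (hv : v ∈ ({0, ![1, 1/2], ![1/2, 1]} : Set (Fin 2 → ℝ))) :
      v ∈ triangle := subset_convexHull ℝ _ hv
  have hdot (r s : ℝ) : u ⬝ᵥ ![r, s] = u 0 * r + u 1 * s := by simp [dotProduct]
  rcases le_or_gt 0 (u 0 * u 1) with hsame | hopp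
  · by_cases h0 : u 0 = 0
    · have h1 : u 1 ≠ 0 := fun h1 => hu (funext (Fin.forall_fin_two.mpr ⟨h0, h1⟩))
      refine ⟨1, h1, 0, hvertex (by simp), ![1/2, 1], hvertex (by simp), ?_⟩
      simp [hdot, h0]
    · refine ⟨0, h0, 0, hvertex (by simp), ![1, 1/2], hvertex (by simp), ?_⟩
      rw [hdot, dotProduct_zero, sub_zero, ← sq_le_sq]
      nlinarith [sq_nonneg (u 1)]
  · have hwidth : |u ⬝ᵥ ![1/2, 1] - u ⬝ᵥ ![1, 1/2]| = (|u 0| + |u 1|) / 2 := by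
      rw [hdot, hdot]
      rcases mul_neg_iff.mp hopp with ⟨h0, h1⟩ | ⟨h0, h1⟩
      · rw [abs_of_pos h0, abs_of_neg h1, abs_of_neg (by linarith)]
        ring
      · rw [abs_of_neg h0, abs_of_pos h1, abs_of_pos (by linarith)]
        ring
    rcases le_total |u 0| |u 1| with hle | hle
    · exact ⟨0, left_ne_zero_of_mul hopp.ne, ![1, 1/2], hvertex (by simp), ![1/2, 1],
        hvertex (by simp), by rw [hwidth]; linarith⟩
    · exact ⟨1, right_ne_zero_of_mul hopp.ne, ![1, 1/2], hvertex (by simp), ![1/2, 1],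
        hvertex (by simp), by rw [hwidth]; linarith⟩

lemma nonSeparable_intLattice_triangle : NonSeparable (intLattice 2) triangle := by
  intro u hu c
  obtain ⟨i, hi, v, hv, w, hw, hle⟩ := exists_abs_apply_le_abs_dotProduct_sub hu
  rw [← dotProduct_single_one u i] at hi hle
  obtain ⟨k, y, hy, hyc⟩ :=
    exists_zsmul_dotProduct_add_eq_of_abs_le (convex_convexHull ℝ _) hv hw hi hle c
  refine ⟨_, ⟨k • Pi.single i 1, rfl⟩, y, hy, ?_⟩
  convert hyc using 3
  ext j
  simp [Pi.single_apply]

theorem isStarCritical_one_triangle : IsStarCritical 1 triangle where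
  det_ne_zero := by simp
  nonSeparable := latticeOf_one 2 ▸ nonSeparable_intLattice_triangle
  abs_det_le B hB h := by
    have hdet : (of ![![1, 1/2], ![1/2, 1]] : Matrix (Fin 2) (Fin 2) ℝ).det = 3 / 4 := by
      rw [det_fin_two]
      norm_num
    have hle := h.abs_det_le_of_convexHull_zero_pair hB (by rw [hdet]; norm_num)
    rw [hdet] at hle
    rw [det_one, abs_one]
    exact hle.trans_eq (by norm_num)

end Triangle

/-- For the triangle `T = conv{(0,0),(1,1/2),(1/2,1)}`: `d_{2,1}(T) = 3/8` and
`ℤ²` is a *critical lattice for `T` (noting `d(ℤ²) = 1`). -/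
theorem d21_triangle :
    dTrans (convexHull ℝ ({![0, 0], ![1, 1/2], ![1/2, 1]} : Set (Fin 2 → ℝ))) = 3 / 8 ∧
    NonSeparable (intLattice 2)
      (convexHull ℝ ({![0, 0], ![1, 1/2], ![1/2, 1]} : Set (Fin 2 → ℝ))) ∧
    (1 : ℝ) = starCritDet (convexHull ℝ ({![0, 0], ![1, 1/2], ![1/2, 1]} : Set (Fin 2 → ℝ))) := by
  have hT : convexHull ℝ ({![0, 0], ![1, 1/2], ![1/2, 1]} : Set (Fin 2 → ℝ)) = triangle := by
    rw [triangle, show (![0, 0] : Fin 2 → ℝ) = 0 by simp]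
  have hcrit := isStarCritical_one_triangle
  rw [hT, hcrit.dTrans_eq, hcrit.starCritDet_eq, volume_triangle]
  exact ⟨by norm_num, nonSeparable_intLattice_triangle, by simp⟩
end
end

section
/- For the closed unit ball B in ℝ³, d_{3,2}(B) = π/(6√2). -/
open MeasureTheory Set Matrix Pointwise

noncomputable section

/-!
By duality, `A · ℤⁿ` plus the unit ball is non-separable exactly when all nonzero vectors of the
dual lattice have length at least `1 / 2`. Gauss's bound `μ ^ 3 ≤ 2 * det ^ 2` for the minimum `μ`
of the squared length on a three-dimensional lattice then bounds `|det A|`, with equality for the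
body-centred cubic lattice.

For Gauss's bound, a superbase `v₀, v₁, v₂, v₃` that minimises the sum of the squared lengths is
obtuse (Selling), so the numbers `-vᵢ · vⱼ` are nonnegative edge weights on the complete graph `K₄`.
The weight of the cut `s` is the squared length of `∑ i ∈ s, vᵢ`, hence at least `μ`, and the
squared determinant of the lattice is the weighted number of spanning trees. Counting each spanning
tree through its three edges bounds this number below by the cut weights.
-/

section LatticeAsSubmodule

variable {n : ℕ}

/-- The set `latticeOf A` as the `ℤ`-module generated by the columns of `A`. -/
def columnLattice (A : Matrix (Fin n) (Fin n) ℝ) : Submodule ℤ (Fin n → ℝ) :=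
  Submodule.span ℤ (range A.col)

theorem mem_columnLattice {A : Matrix (Fin n) (Fin n) ℝ} {x : Fin n → ℝ} :
    x ∈ columnLattice A ↔ x ∈ latticeOf A := by
  simp only [columnLattice, latticeOf, Submodule.mem_span_range_iff_exists_fun, mem_range,
    mulVec_eq_sum, op_smul_eq_smul, Int.cast_smul_eq_zsmul]
  rfl

theorem col_mem_latticeOf (A : Matrix (Fin n) (Fin n) ℝ) (i : Fin n) : A.col i ∈ latticeOf A :=
  mem_columnLattice.1 (Submodule.subset_span ⟨i, rfl⟩)

theorem finite_columnLattice_inter_dotProduct_self_le {A : Matrix (Fin n) (Fin n) ℝ}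
    (hA : A.det ≠ 0) (R : ℝ) : {x | x ∈ columnLattice A ∧ x ⬝ᵥ x ≤ R}.Finite := by
  classical
  let b := basisOfPiSpaceOfLinearIndependent (linearIndependent_cols_of_det_ne_zero hA)
  have hb : columnLattice A = Submodule.span ℤ (range b) := by
    rw [columnLattice, coe_basisOfPiSpaceOfLinearIndependent]
  have hbounded : Bornology.IsBounded {x : Fin n → ℝ | x ⬝ᵥ x ≤ R} := by
    refine (Metric.isBounded_closedBall (x := 0) (r := √R)).subset fun x hx ↦ ?_
    rw [mem_closedBall_zero_iff, pi_norm_le_iff_of_nonneg (Real.sqrt_nonneg R)]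
    intro i
    have hxi : x i * x i ≤ x ⬝ᵥ x :=
      Finset.single_le_sum (f := fun i ↦ x i * x i) (fun i _ ↦ mul_self_nonneg _)
        (Finset.mem_univ i)
    exact Real.abs_le_sqrt (by rw [sq]; exact hxi.trans hx)
  rw [hb]
  exact (ZSpan.setFinite_inter b hbounded).subset fun x hx ↦ ⟨hx.2, hx.1⟩

theorem mem_latticeOf_inv_transpose_iff {A : Matrix (Fin n) (Fin n) ℝ} (hA : A.det ≠ 0)
    {u : Fin n → ℝ} :
    u ∈ latticeOf (A⁻¹)ᵀ ↔ ∀ x ∈ latticeOf A, ∃ k : ℤ, u ⬝ᵥ x = k := by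
  have hA' : IsUnit A.det := isUnit_iff_ne_zero.2 hA
  constructor
  · rintro ⟨m, rfl⟩ _ ⟨l, rfl⟩
    refine ⟨m ⬝ᵥ l, ?_⟩
    beta_reduce
    rw [mulVec_transpose, ← dotProduct_mulVec, mulVec_mulVec, nonsing_inv_mul _ hA', one_mulVec]
    simp [dotProduct]
  · intro h
    choose m hm using fun i ↦ h _ (col_mem_latticeOf A i)
    have hum : u ᵥ* A = fun i ↦ (m i : ℝ) := funext hm
    refine ⟨m, ?_⟩
    beta_reduce
    rw [← hum, mulVec_transpose, vecMul_vecMul, mul_nonsing_inv _ hA', vecMul_one]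

end LatticeAsSubmodule

section Duality

variable {n : ℕ}

theorem exists_mem_unitBall_dotProduct_eq_iff {u : Fin n → ℝ} {t : ℝ} :
    (∃ y ∈ {y : Fin n → ℝ | y ⬝ᵥ y ≤ 1}, u ⬝ᵥ y = t) ↔ t ^ 2 ≤ u ⬝ᵥ u := by
  have hu : 0 ≤ u ⬝ᵥ u := dotProduct_self_star_nonneg u
  constructor
  · rintro ⟨y, hy, rfl⟩
    calc (u ⬝ᵥ y) ^ 2 ≤ (u ⬝ᵥ u) * (y ⬝ᵥ y) := by
          simpa only [dotProduct, sq] using Finset.sum_mul_sq_le_sq_mul_sq Finset.univ u y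
      _ ≤ u ⬝ᵥ u := mul_le_of_le_one_right hu hy
  · intro ht
    rcases hu.eq_or_lt with hu0 | hupos
    · have ht0 : t = 0 := by nlinarith
      exact ⟨0, by simp, by simp [ht0]⟩
    · refine ⟨(t / (u ⬝ᵥ u)) • u, ?_, ?_⟩
      · have hnorm : (t / (u ⬝ᵥ u)) • u ⬝ᵥ (t / (u ⬝ᵥ u)) • u = t ^ 2 / (u ⬝ᵥ u) := by
          simp only [smul_dotProduct, dotProduct_smul, smul_eq_mul]
          field_simp
        rw [mem_ofPred_eq, hnorm]
        exact div_le_one_of_le₀ ht hu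
      · rw [dotProduct_smul, smul_eq_mul, div_mul_cancel₀ _ hupos.ne']

theorem nonSeparable_unitBall_iff {Λ : Set (Fin n → ℝ)} :
    NonSeparable Λ {x | x ⬝ᵥ x ≤ 1} ↔
      ∀ u : Fin n → ℝ, u ≠ 0 → ∀ c : ℝ, ∃ x ∈ Λ, (c - u ⬝ᵥ x) ^ 2 ≤ u ⬝ᵥ u := by
  simp only [NonSeparable, ← exists_mem_unitBall_dotProduct_eq_iff, dotProduct_add,
    eq_sub_iff_add_eq']

theorem exists_mem_addSubgroup_sq_sub_le {G : AddSubgroup ℝ} {r : ℝ} (hr : 0 < r)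
    (hG : ∀ t, G = AddSubgroup.zmultiples t → t ≠ 0 ∧ t ^ 2 ≤ 4 * r) (c : ℝ) :
    ∃ g ∈ G, (c - g) ^ 2 ≤ r := by
  rcases G.dense_or_cyclic with hdense | ⟨t, ht⟩
  · obtain ⟨g, hg, hdist⟩ := hdense.exists_dist_lt c (Real.sqrt_pos.2 hr)
    rw [Real.dist_eq] at hdist
    exact ⟨g, hg, (Real.sqrt_le_sqrt_iff hr.le).1 (by rw [Real.sqrt_sq_eq_abs]; exact hdist.le)⟩
  · rw [← AddSubgroup.zmultiples_eq_closure] at ht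
    obtain ⟨ht0, htr⟩ := hG t ht
    refine ⟨round (c / t) • t, ht ▸ AddSubgroup.zsmul_mem_zmultiples t _, ?_⟩
    have hround : (c / t - round (c / t)) ^ 2 ≤ (1 / 2) ^ 2 := sq_le_sq.2 (by
      rw [abs_of_pos (one_half_pos (α := ℝ))]; exact abs_sub_round (c / t))
    calc (c - round (c / t) • t) ^ 2 = (c / t - round (c / t)) ^ 2 * t ^ 2 := by
          rw [zsmul_eq_mul]; field_simp
      _ ≤ (1 / 2) ^ 2 * (4 * r) := mul_le_mul hround htr (sq_nonneg t) (by norm_num)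
      _ = r := by ring

theorem one_fourth_le_dotProduct_self_of_nonSeparable {A : Matrix (Fin n) (Fin n) ℝ}
    (hA : A.det ≠ 0) (hns : NonSeparable (latticeOf A) {x | x ⬝ᵥ x ≤ 1})
    {u : Fin n → ℝ} (hu : u ∈ latticeOf (A⁻¹)ᵀ) (hu0 : u ≠ 0) : 1 / 4 ≤ u ⬝ᵥ u := by
  obtain ⟨x, hx, hxu⟩ := nonSeparable_unitBall_iff.1 hns u hu0 (1 / 2)
  obtain ⟨k, hk⟩ := (mem_latticeOf_inv_transpose_iff hA).1 hu x hx
  have hint : (0 : ℝ) ≤ k * (k - 1) := by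
    have : 0 ≤ k * (k - 1) := by rcases le_or_gt k 0 with h | h <;> nlinarith
    exact_mod_cast this
  rw [hk] at hxu
  linarith

theorem nonSeparable_of_one_fourth_le_dotProduct_self {A : Matrix (Fin n) (Fin n) ℝ}
    (hA : A.det ≠ 0) (hdual : ∀ u ∈ latticeOf (A⁻¹)ᵀ, u ≠ 0 → 1 / 4 ≤ u ⬝ᵥ u) :
    NonSeparable (latticeOf A) {x | x ⬝ᵥ x ≤ 1} := by
  rw [nonSeparable_unitBall_iff]
  intro u hu0 c
  have hupos : 0 < u ⬝ᵥ u := dotProduct_self_star_pos_iff.2 hu0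
  let G : AddSubgroup ℝ :=
    (columnLattice A).toAddSubgroup.map (dotProductBilin ℝ ℝ u).toAddMonoidHom
  have hmem {x : Fin n → ℝ} (hx : x ∈ latticeOf A) : u ⬝ᵥ x ∈ G :=
    ⟨x, mem_columnLattice.2 hx, rfl⟩
  have hcyclic (t : ℝ) (ht : G = AddSubgroup.zmultiples t) : t ≠ 0 ∧ t ^ 2 ≤ 4 * (u ⬝ᵥ u) := by
    have ht' {x : Fin n → ℝ} (hx : x ∈ latticeOf A) : ∃ k : ℤ, u ⬝ᵥ x = k * t := by
      obtain ⟨k, hk⟩ := AddSubgroup.mem_zmultiples_iff.1 (ht ▸ hmem hx)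
      exact ⟨k, by rw [← hk, zsmul_eq_mul]⟩
    have ht0 : t ≠ 0 := by
      rintro rfl
      refine hu0 (eq_zero_of_vecMul_eq_zero hA (funext fun i ↦ ?_))
      obtain ⟨k, hk⟩ := ht' (col_mem_latticeOf A i)
      exact hk.trans (mul_zero _)
    have hdual_mem : t⁻¹ • u ∈ latticeOf (A⁻¹)ᵀ := by
      refine (mem_latticeOf_inv_transpose_iff hA).2 fun x hx ↦ ?_
      obtain ⟨k, hk⟩ := ht' hx
      exact ⟨k, by rw [smul_dotProduct, hk, smul_eq_mul]; field_simp⟩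
    have hle := hdual _ hdual_mem (smul_ne_zero (inv_ne_zero ht0) hu0)
    rw [smul_dotProduct, dotProduct_smul, smul_eq_mul, smul_eq_mul, ← mul_assoc, ← mul_inv,
      ← sq, inv_mul_eq_div, le_div_iff₀ (by positivity)] at hle
    exact ⟨ht0, by linarith⟩
  obtain ⟨_, ⟨x, hx, rfl⟩, hcx⟩ := exists_mem_addSubgroup_sq_sub_le hupos hcyclic c
  exact ⟨x, mem_columnLattice.1 hx, hcx⟩

end Duality

section WeightedK4

/-- The weighted number of spanning trees of a triangle with edge weights `x`, `y`, `z`. -/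
def triangleTreeSum (x y z : ℝ) : ℝ :=
  x * y + y * z + z * x

theorem three_fourths_mul_sq_le_triangleTreeSum {x y z μ : ℝ} (hμ : 0 ≤ μ) (hx : 0 ≤ x)
    (hy : 0 ≤ y) (hz : 0 ≤ z) (hxy : μ ≤ x + y) (hyz : μ ≤ y + z) (hzx : μ ≤ z + x) :
    3 / 4 * μ ^ 2 ≤ triangleTreeSum x y z := by
  have hsum : 3 / 2 * μ ≤ x + y + z := by linarith
  calc 3 / 4 * μ ^ 2 = μ / 2 * (3 / 2 * μ) := by ring
    _ ≤ μ / 2 * (x + y + z) := by gcongr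
    _ = (x * μ + y * μ + z * μ) / 2 := by ring
    _ ≤ (x * (y + z) + y * (z + x) + z * (x + y)) / 2 := by gcongr
    _ = triangleTreeSum x y z := by rw [triangleTreeSum]; ring

/-- The Laplacian of the complete graph on `n + 1` vertices with edge weights `p`, with the row and
the column of the last vertex deleted. By the matrix-tree theorem its determinant is the weighted
number of spanning trees. The diagonal of `p` is ignored. -/
def reducedLaplacian {n : ℕ} (p : Fin (n + 1) → Fin (n + 1) → ℝ) : Matrix (Fin n) (Fin n) ℝ :=
  Matrix.of fun i j ↦
    if i = j then ∑ k ∈ {i.castSucc}ᶜ, p i.castSucc k else -p i.castSucc j.castSucc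

/-- The weighted number of spanning trees of the triangle that arises from the complete graph on
the vertices `i`, `j`, `k`, `l` with edge weights `p` by contracting the edge `ij`. -/
def contractedTreeSum (p : Fin 4 → Fin 4 → ℝ) (i j k l : Fin 4) : ℝ :=
  triangleTreeSum (p k l) (p i k + p j k) (p i l + p j l)

/-- Every cut of the complete graph on `ι` with edge weights `p` has weight at least `μ`. -/
def CutsAtLeast {ι : Type*} [Fintype ι] [DecidableEq ι] (p : ι → ι → ℝ) (μ : ℝ) : Prop :=
  ∀ s : Finset ι, s.Nonempty → sᶜ.Nonempty → μ ≤ ∑ i ∈ s, ∑ j ∈ sᶜ, p i j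

variable {p : Fin 4 → Fin 4 → ℝ}

/- Each spanning tree has three edges, and the trees through an edge are the spanning trees of the
triangle obtained by contracting it. -/
theorem three_mul_det_reducedLaplacian (hp : ∀ i j, p i j = p j i) :
    3 * (reducedLaplacian p).det =
      p 0 1 * contractedTreeSum p 0 1 2 3 + p 0 2 * contractedTreeSum p 0 2 1 3 +
      p 0 3 * contractedTreeSum p 0 3 1 2 + p 1 2 * contractedTreeSum p 1 2 0 3 +
      p 1 3 * contractedTreeSum p 1 3 0 2 + p 2 3 * contractedTreeSum p 2 3 0 1 := by
  have hcompl (i : Fin 4) (f : Fin 4 → ℝ) :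
      ∑ k ∈ {i}ᶜ, f k = f 0 + f 1 + f 2 + f 3 - f i := by
    rw [← Fin.sum_univ_four, ← Finset.sum_compl_add_sum {i}, Finset.sum_singleton,
      add_sub_cancel_right]
  have hdet : (reducedLaplacian p).det = !![p 0 1 + p 0 2 + p 0 3, -p 0 1, -p 0 2;
      -p 0 1, p 0 1 + p 1 2 + p 1 3, -p 1 2; -p 0 2, -p 1 2, p 0 2 + p 1 2 + p 2 3].det := by
    congr 1
    ext i j
    fin_cases i <;> fin_cases j <;>
      simp [reducedLaplacian, hcompl, hp 1 0, hp 2 0, hp 2 1] <;> ring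
  rw [hdet, det_fin_three]
  simp only [of_apply, cons_val, contractedTreeSum, triangleTreeSum, hp 1 0, hp 2 0, hp 2 1,
    hp 3 0, hp 3 1, hp 3 2]
  ring

variable {μ : ℝ}

theorem le_sum_of_cutsAtLeast_singleton (hcut : CutsAtLeast p μ) {i j k l : Fin 4}
    (hijkl : [i, j, k, l].Nodup) : μ ≤ p i j + p i k + p i l := by
  have hcompl : ({i}ᶜ : Finset (Fin 4)) = {j, k, l} := by decide +revert
  have hjk : j ∉ ({k, l} : Finset (Fin 4)) := by decide +revert
  have hkl : k ≠ l := by decide +revert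
  have hi := hcut {i} (Finset.singleton_nonempty i) (by simp [hcompl])
  rwa [Finset.sum_singleton, hcompl, Finset.sum_insert hjk, Finset.sum_pair hkl,
    ← add_assoc] at hi

theorem le_sum_of_cutsAtLeast_pair (hcut : CutsAtLeast p μ) {i j k l : Fin 4}
    (hijkl : [i, j, k, l].Nodup) :
    μ ≤ p i k + p i l + (p j k + p j l) := by
  have hcompl : ({i, j}ᶜ : Finset (Fin 4)) = {k, l} := by decide +revert
  have hij : i ≠ j := by decide +revert
  have hkl : k ≠ l := by decide +revert
  have h := hcut {i, j} (Finset.insert_nonempty i {j}) (by simp [hcompl])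
  rwa [Finset.sum_pair hij, hcompl, Finset.sum_pair hkl, Finset.sum_pair hkl] at h

theorem three_fourths_mul_sq_le_contractedTreeSum (hp : ∀ i j, p i j = p j i)
    (hnonneg : ∀ i j, i ≠ j → 0 ≤ p i j) (hμ : 0 ≤ μ) (hcut : CutsAtLeast p μ) {i j k l : Fin 4}
    (hijkl : [i, j, k, l].Nodup) :
    3 / 4 * μ ^ 2 ≤ contractedTreeSum p i j k l := by
  have hklij : [k, l, i, j].Nodup := by decide +revert
  have hlkij : [l, k, i, j].Nodup := by decide +revert
  obtain ⟨hik, hjk, hil, hjl, hkl⟩ : i ≠ k ∧ j ≠ k ∧ i ≠ l ∧ j ≠ l ∧ k ≠ l := by decide +revert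
  have hcut_k := le_sum_of_cutsAtLeast_singleton hcut hklij
  have hcut_l := le_sum_of_cutsAtLeast_singleton hcut hlkij
  have hcut_ij := le_sum_of_cutsAtLeast_pair hcut hijkl
  rw [hp k i, hp k j] at hcut_k
  rw [hp l k, hp l i, hp l j] at hcut_l
  exact three_fourths_mul_sq_le_triangleTreeSum hμ (hnonneg k l hkl)
    (add_nonneg (hnonneg i k hik) (hnonneg j k hjk))
    (add_nonneg (hnonneg i l hil) (hnonneg j l hjl)) (by linarith) (by linarith) (by linarith)

theorem two_mul_le_sum_weights (hp : ∀ i j, p i j = p j i) (hcut : CutsAtLeast p μ) :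
    2 * μ ≤ p 0 1 + p 0 2 + p 0 3 + p 1 2 + p 1 3 + p 2 3 := by
  have hcut₀ := le_sum_of_cutsAtLeast_singleton hcut (i := 0) (j := 1) (k := 2) (l := 3) (by decide)
  have hcut₁ := le_sum_of_cutsAtLeast_singleton hcut (i := 1) (j := 0) (k := 2) (l := 3) (by decide)
  have hcut₂ := le_sum_of_cutsAtLeast_singleton hcut (i := 2) (j := 0) (k := 1) (l := 3) (by decide)
  have hcut₃ := le_sum_of_cutsAtLeast_singleton hcut (i := 3) (j := 0) (k := 1) (l := 2) (by decide)
  linarith [hp 1 0, hp 2 0, hp 2 1, hp 3 0, hp 3 1, hp 3 2]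

theorem cube_le_two_mul_det_reducedLaplacian (hp : ∀ i j, p i j = p j i)
    (hnonneg : ∀ i j, i ≠ j → 0 ≤ p i j) (hμ : 0 ≤ μ) (hcut : CutsAtLeast p μ) :
    μ ^ 3 ≤ 2 * (reducedLaplacian p).det := by
  have hthree : 2 * μ * (3 / 4 * μ ^ 2) ≤ 3 * (reducedLaplacian p).det :=
    calc 2 * μ * (3 / 4 * μ ^ 2)
        ≤ (p 0 1 + p 0 2 + p 0 3 + p 1 2 + p 1 3 + p 2 3) * (3 / 4 * μ ^ 2) := by
          gcongr; exact two_mul_le_sum_weights hp hcut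
      _ ≤ 3 * (reducedLaplacian p).det := by
          rw [three_mul_det_reducedLaplacian hp]
          simp only [add_mul]
          gcongr <;>
            first
            | exact hnonneg _ _ (by decide)
            | exact three_fourths_mul_sq_le_contractedTreeSum hp hnonneg hμ hcut (by decide)
  linarith

end WeightedK4

section Superbase

variable {E : Type*} [AddCommGroup E]

/-- A superbase of a lattice `L`: generators with sum zero. A lattice of rank `n` has superbases
indexed by `Fin (n + 1)`, consisting of a basis and the negative of its sum. -/
structure IsSuperbase {ι : Type*} [Fintype ι] (L : Submodule ℤ E) (v : ι → E) : Prop where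
  sum_eq_zero : ∑ k, v k = 0
  span_range_eq : Submodule.span ℤ (range v) = L

theorem IsSuperbase.mem {ι : Type*} [Fintype ι] {L : Submodule ℤ E} {v : ι → E}
    (hv : IsSuperbase L v) (k : ι) : v k ∈ L :=
  hv.span_range_eq ▸ Submodule.subset_span ⟨k, rfl⟩

theorem isSuperbase_snoc_neg_sum {n : ℕ} (b : Fin n → E) :
    IsSuperbase (Submodule.span ℤ (range b))
      (Fin.snoc b (-∑ i, b i) : Fin (n + 1) → E) where
  sum_eq_zero := by simp [Fin.sum_univ_castSucc]
  span_range_eq := by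
    rw [Fin.range_snoc, Submodule.span_insert_eq_span]
    exact neg_mem (sum_mem fun i _ ↦ Submodule.subset_span ⟨i, rfl⟩)

theorem IsSuperbase.span_range_init {n : ℕ} {L : Submodule ℤ E} {v : Fin (n + 1) → E}
    (hv : IsSuperbase L v) : Submodule.span ℤ (range (Fin.init v)) = L := by
  have hlast : v (Fin.last n) = -∑ i, Fin.init v i :=
    eq_neg_of_add_eq_zero_right ((Fin.sum_univ_castSucc v).symm.trans hv.sum_eq_zero)
  rw [← (isSuperbase_snoc_neg_sum (Fin.init v)).span_range_eq, ← hlast, Fin.snoc_init_self,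
    hv.span_range_eq]

theorem eq_last_of_sum_smul_eq_zero {R : Type*} [Ring R] [Module R E] {n : ℕ}
    {v : Fin (n + 1) → E} (hv : ∑ i, v i = 0) (hli : LinearIndependent R (Fin.init v))
    {c : Fin (n + 1) → R} (hc : ∑ i, c i • v i = 0) (i : Fin (n + 1)) :
    c i = c (Fin.last n) := by
  have hrel : ∑ i : Fin n, (c i.castSucc - c (Fin.last n)) • Fin.init v i = 0 := by
    have hsub : ∑ i, (c i - c (Fin.last n)) • v i = 0 := by
      simp only [sub_smul, Finset.sum_sub_distrib, hc, ← Finset.smul_sum, hv, smul_zero, sub_zero]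
    simpa [Fin.sum_univ_castSucc, Fin.init] using hsub
  induction i using Fin.lastCases with
  | last => rfl
  | cast i => exact sub_eq_zero.1 (Fintype.linearIndependent_iff.1 hli _ hrel i)

theorem sum_ne_zero_of_linearIndependent_init {R : Type*} [Ring R] [Nontrivial R] [Module R E]
    {n : ℕ} {v : Fin (n + 1) → E} (hv : ∑ i, v i = 0) (hli : LinearIndependent R (Fin.init v))
    {s : Finset (Fin (n + 1))} (hs : s.Nonempty) (hs' : sᶜ.Nonempty) : ∑ i ∈ s, v i ≠ 0 := by
  intro h0
  have hrel : ∑ i, (if i ∈ s then (1 : R) else 0) • v i = 0 := by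
    simpa [ite_smul, Finset.sum_ite_mem] using h0
  obtain ⟨i, hi⟩ := hs
  obtain ⟨j, hj⟩ := hs'
  have hij := (eq_last_of_sum_smul_eq_zero hv hli hrel i).trans
    (eq_last_of_sum_smul_eq_zero hv hli hrel j).symm
  simp [hi, Finset.mem_compl.1 hj] at hij

end Superbase

section SellingReduction

variable {E : Type*} [AddCommGroup E]

/-- Selling's reduction step for superbases of lattices of rank three. It decreases the sum of the
squared lengths if `v i` and `v j` form an acute angle. -/
def sellingStep (v : Fin 4 → E) (i j k : Fin 4) : E :=
  if k = i then -v i else if k = j then v j else v k + v i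

/-- The multiple of `v i` that is added to `v k` in `sellingStep v i j`. -/
def sellingCoeff (i j k : Fin 4) : ℤ :=
  if k = i then -2 else if k = j then 0 else 1

theorem sellingCoeff_eq {i j : Fin 4} (hij : i ≠ j) (k : Fin 4) :
    sellingCoeff i j k = 1 - 3 * (if k = i then 1 else 0) - if k = j then 1 else 0 := by
  decide +revert

theorem sum_sellingCoeff {i j : Fin 4} (hij : i ≠ j) : ∑ k, sellingCoeff i j k = 0 := by
  decide +revert

theorem sum_sellingCoeff_sq {i j : Fin 4} (hij : i ≠ j) : ∑ k, sellingCoeff i j k ^ 2 = 6 := by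
  decide +revert

theorem sellingStep_eq_add_zsmul (v : Fin 4 → E) (i j k : Fin 4) :
    sellingStep v i j k = v k + sellingCoeff i j k • v i := by
  rw [sellingStep, sellingCoeff]
  split_ifs with hki hkj
  · rw [hki]; module
  · rw [hkj]; module
  · module

theorem isSuperbase_sellingStep {L : Submodule ℤ E} {v : Fin 4 → E} (hv : IsSuperbase L v)
    {i j : Fin 4} (hij : i ≠ j) : IsSuperbase L (sellingStep v i j) where
  sum_eq_zero := by
    simp only [sellingStep_eq_add_zsmul, Finset.sum_add_distrib, hv.sum_eq_zero,
      ← Finset.sum_smul, sum_sellingCoeff hij, zero_smul, add_zero]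
  span_range_eq := by
    set M := Submodule.span ℤ (range (sellingStep v i j)) with hM
    have hmem (k : Fin 4) : sellingStep v i j k ∈ M := Submodule.subset_span ⟨k, rfl⟩
    have hi : v i ∈ M := by simpa [sellingStep] using hmem i
    refine le_antisymm ?_ ?_
    · rw [hM, Submodule.span_le]
      rintro _ ⟨k, rfl⟩
      rw [sellingStep_eq_add_zsmul]
      exact add_mem (hv.mem k) (L.smul_mem _ (hv.mem i))
    · rw [← hv.span_range_eq, Submodule.span_le]
      rintro _ ⟨k, rfl⟩
      have hk := hmem k
      rw [sellingStep_eq_add_zsmul] at hk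
      exact (Submodule.add_mem_iff_left _ (Submodule.smul_mem _ _ hi)).1 hk

variable {n : ℕ} {L : Submodule ℤ (Fin n → ℝ)} {v : Fin 4 → Fin n → ℝ}

theorem sum_dotProduct_self_sellingStep (hv : ∑ k, v k = 0) {i j : Fin 4} (hij : i ≠ j) :
    ∑ k, sellingStep v i j k ⬝ᵥ sellingStep v i j k = ∑ k, v k ⬝ᵥ v k - 2 * (v i ⬝ᵥ v j) := by
  have hexpand (k : Fin 4) : sellingStep v i j k ⬝ᵥ sellingStep v i j k =
      v k ⬝ᵥ v k + 2 * (sellingCoeff i j k * (v i ⬝ᵥ v k)) +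
        (sellingCoeff i j k ^ 2 : ℤ) * (v i ⬝ᵥ v i) := by
    rw [sellingStep_eq_add_zsmul, ← Int.cast_smul_eq_zsmul ℝ]
    simp only [add_dotProduct, dotProduct_add, smul_dotProduct, dotProduct_smul, smul_eq_mul,
      dotProduct_comm (v k) (v i), Int.cast_pow]
    ring
  have hcross : ∑ k, sellingCoeff i j k * (v i ⬝ᵥ v k) = -3 * (v i ⬝ᵥ v i) - v i ⬝ᵥ v j := by
    have hzero : ∑ k, v i ⬝ᵥ v k = 0 := by rw [← dotProduct_sum, hv, dotProduct_zero]
    simp [sellingCoeff_eq hij, sub_mul, Finset.sum_sub_distrib, hzero]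
  simp only [hexpand, Finset.sum_add_distrib, ← Finset.mul_sum, ← Finset.sum_mul, hcross]
  rw [← Int.cast_sum, sum_sellingCoeff_sq hij]
  push_cast
  ring

theorem IsSuperbase.exists_obtuse (hL : ∀ R : ℝ, {x | x ∈ L ∧ x ⬝ᵥ x ≤ R}.Finite)
    (hv : IsSuperbase L v) :
    ∃ w : Fin 4 → Fin n → ℝ, IsSuperbase L w ∧ ∀ i j, i ≠ j → w i ⬝ᵥ w j ≤ 0 := by
  let energy (w : Fin 4 → Fin n → ℝ) : ℝ := ∑ k, w k ⬝ᵥ w k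
  have hfin : {w | IsSuperbase L w ∧ energy w ≤ energy v}.Finite := by
    refine (Finite.pi' fun _ : Fin 4 ↦ hL (energy v)).subset fun w hw k ↦ ⟨hw.1.mem k, ?_⟩
    exact (Finset.single_le_sum (f := fun k ↦ w k ⬝ᵥ w k)
      (fun k _ ↦ dotProduct_self_star_nonneg (w k)) (Finset.mem_univ k)).trans hw.2
  obtain ⟨w, ⟨hw, hwv⟩, hmin⟩ := exists_min_image _ energy hfin ⟨v, hv, le_rfl⟩
  refine ⟨w, hw, fun i j hij ↦ ?_⟩
  by_contra! hpos
  have hstep : energy (sellingStep w i j) = energy w - 2 * (w i ⬝ᵥ w j) :=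
    sum_dotProduct_self_sellingStep hw.sum_eq_zero hij
  have := hmin _ ⟨isSuperbase_sellingStep hw hij, by linarith⟩
  linarith

end SellingReduction

section Gram

variable {n : ℕ}

theorem dotProduct_self_sum_eq_of_sum_eq_zero {ι : Type*} [Fintype ι] [DecidableEq ι]
    {v : ι → Fin n → ℝ} (hv : ∑ i, v i = 0) (s : Finset ι) :
    (∑ i ∈ s, v i) ⬝ᵥ (∑ i ∈ s, v i) = ∑ i ∈ s, ∑ j ∈ sᶜ, -(v i ⬝ᵥ v j) := by
  have hcompl : ∑ i ∈ s, v i = -∑ j ∈ sᶜ, v j :=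
    eq_neg_of_add_eq_zero_left (by rw [Finset.sum_add_sum_compl, hv])
  nth_rw 2 [hcompl]
  simp only [dotProduct_neg, sum_dotProduct, dotProduct_sum, Finset.sum_neg_distrib]
  rw [Finset.sum_comm]

theorem mul_transpose_init_eq_reducedLaplacian {m : ℕ} {v : Fin (m + 1) → Fin n → ℝ}
    (hv : ∑ i, v i = 0) :
    Matrix.of (Fin.init v) * (Matrix.of (Fin.init v))ᵀ =
      reducedLaplacian fun i j ↦ -(v i ⬝ᵥ v j) := by
  ext i j
  change v i.castSucc ⬝ᵥ v j.castSucc = _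
  rw [reducedLaplacian, of_apply]
  split_ifs with hij
  · subst hij
    simpa using dotProduct_self_sum_eq_of_sum_eq_zero hv {i.castSucc}
  · rw [neg_neg]

theorem exists_det_eq_intCast_mul_det {A V : Matrix (Fin n) (Fin n) ℝ}
    (h : ∀ i, A.row i ∈ Submodule.span ℤ (range V.row)) : ∃ d : ℤ, A.det = d * V.det := by
  simp only [Submodule.mem_span_range_iff_exists_fun] at h
  choose N hN using h
  have hmul : A = (Matrix.of N).map (Int.cast : ℤ → ℝ) * V := by
    ext i j
    simpa [mul_apply] using (congrFun (hN i) j).symm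
  exact ⟨(Matrix.of N).det, by rw [Int.cast_det, ← det_mul, ← hmul]⟩

variable {B : Matrix (Fin n) (Fin n) ℝ} {v : Fin (n + 1) → Fin n → ℝ}

theorem IsSuperbase.exists_det_eq_intCast_mul_det_init (hv : IsSuperbase (columnLattice B) v) :
    ∃ d : ℤ, B.det = d * (Matrix.of (Fin.init v)).det := by
  rw [← det_transpose]
  refine exists_det_eq_intCast_mul_det fun i ↦ ?_
  change B.col i ∈ Submodule.span ℤ (range (Fin.init v))
  rw [hv.span_range_init]
  exact Submodule.subset_span ⟨i, rfl⟩

theorem IsSuperbase.det_init_ne_zero (hv : IsSuperbase (columnLattice B) v) (hB : B.det ≠ 0) :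
    (Matrix.of (Fin.init v)).det ≠ 0 := by
  obtain ⟨d, hd⟩ := hv.exists_det_eq_intCast_mul_det_init
  exact right_ne_zero_of_mul (hd ▸ hB)

theorem IsSuperbase.det_init_sq_le (hv : IsSuperbase (columnLattice B) v) (hB : B.det ≠ 0) :
    (Matrix.of (Fin.init v)).det ^ 2 ≤ B.det ^ 2 := by
  obtain ⟨d, hd⟩ := hv.exists_det_eq_intCast_mul_det_init
  have hd0 : d ≠ 0 := Int.cast_ne_zero.1 (left_ne_zero_of_mul (hd ▸ hB))
  have hd1 : (1 : ℝ) ≤ (d : ℝ) ^ 2 :=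
    mod_cast (one_le_sq_iff_one_le_abs d).2 (Int.one_le_abs hd0)
  rw [hd, mul_pow]
  exact le_mul_of_one_le_left (sq_nonneg _) hd1

end Gram

theorem cube_le_two_mul_det_sq_of_le_dotProduct_self {B : Matrix (Fin 3) (Fin 3) ℝ}
    (hB : B.det ≠ 0) {μ : ℝ} (hμ : 0 ≤ μ)
    (hmin : ∀ x ∈ latticeOf B, x ≠ 0 → μ ≤ x ⬝ᵥ x) : μ ^ 3 ≤ 2 * B.det ^ 2 := by
  obtain ⟨v, hv, hobtuse⟩ :=
    (isSuperbase_snoc_neg_sum B.col).exists_obtuse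
      (finite_columnLattice_inter_dotProduct_self_le hB)
  have hli : LinearIndependent ℝ (Fin.init v) :=
    linearIndependent_rows_of_det_ne_zero (hv.det_init_ne_zero hB)
  have hgram : (Matrix.of (Fin.init v)).det ^ 2 =
      (reducedLaplacian fun i j ↦ -(v i ⬝ᵥ v j)).det := by
    rw [← mul_transpose_init_eq_reducedLaplacian hv.sum_eq_zero, det_mul, det_transpose, sq]
  calc μ ^ 3 ≤ 2 * (reducedLaplacian fun i j ↦ -(v i ⬝ᵥ v j)).det := by
        refine cube_le_two_mul_det_reducedLaplacian
          (fun i j ↦ congrArg Neg.neg (dotProduct_comm (v i) (v j)))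
          (fun i j hij ↦ neg_nonneg.2 (hobtuse i j hij)) hμ fun s hs hs' ↦ ?_
        rw [← dotProduct_self_sum_eq_of_sum_eq_zero hv.sum_eq_zero]
        exact hmin _ (mem_columnLattice.1 (sum_mem fun i _ ↦ hv.mem i))
          (sum_ne_zero_of_linearIndependent_init hv.sum_eq_zero hli hs hs')
    _ ≤ 2 * B.det ^ 2 := by rw [← hgram]; gcongr 2 * ?_; exact hv.det_init_sq_le hB

theorem abs_det_le_of_nonSeparable {A : Matrix (Fin 3) (Fin 3) ℝ} (hA : A.det ≠ 0)
    (hns : NonSeparable (latticeOf A) {x | x ⬝ᵥ x ≤ 1}) : |A.det| ≤ 8 * √2 := by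
  have hdet : ((A⁻¹)ᵀ).det = A.det⁻¹ := by
    rw [det_transpose, det_nonsing_inv, Ring.inverse_eq_inv']
  have hgauss : (1 / 4 : ℝ) ^ 3 ≤ 2 * A.det⁻¹ ^ 2 := by
    rw [← hdet]
    exact cube_le_two_mul_det_sq_of_le_dotProduct_self (hdet ▸ inv_ne_zero hA) (by norm_num)
      fun _ ↦ one_fourth_le_dotProduct_self_of_nonSeparable hA hns
  have hsq : A.det ^ 2 ≤ 128 := by
    rw [inv_pow, ← div_eq_mul_inv, le_div_iff₀ (by positivity)] at hgauss
    linarith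
  refine abs_le_of_sq_le_sq ?_ (by positivity)
  rw [mul_pow, Real.sq_sqrt zero_le_two]
  linarith

section BodyCenteredCubic

/-- The body-centred cubic lattice, scaled so that its dual, a face-centred cubic lattice, has
minimal vectors of length `1 / 2`. -/
def bcc : Matrix (Fin 3) (Fin 3) ℝ :=
  √2 • !![-1, 1, 1; 1, -1, 1; 1, 1, -1]

theorem det_bcc : bcc.det = 8 * √2 := by
  have hsqrt : √2 ^ 3 = 2 * √2 := by rw [pow_succ, Real.sq_sqrt zero_le_two]
  rw [bcc, det_smul, Fintype.card_fin, hsqrt, det_fin_three]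
  simp only [of_apply, cons_val]
  ring

theorem inv_transpose_bcc : (bcc⁻¹)ᵀ = (√2 / 4) • !![0, 1, 1; 1, 0, 1; 1, 1, 0] := by
  have hinv : bcc⁻¹ = (√2 / 4) • !![0, 1, 1; 1, 0, 1; 1, 1, 0] := by
    refine inv_eq_right_inv ?_
    have hsqrt : √2 * (√2 / 4) = 1 / 2 := by
      rw [← mul_div_assoc, Real.mul_self_sqrt zero_le_two]; norm_num
    rw [bcc, smul_mul_smul_comm, hsqrt]
    ext i j
    fin_cases i <;> fin_cases j <;> norm_num [mul_apply, Fin.sum_univ_three]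
  rw [hinv]
  ext i j
  fin_cases i <;> fin_cases j <;> rfl

theorem one_fourth_le_dotProduct_self_of_mem_inv_transpose_bcc {u : Fin 3 → ℝ}
    (hu : u ∈ latticeOf (bcc⁻¹)ᵀ) (hu0 : u ≠ 0) : 1 / 4 ≤ u ⬝ᵥ u := by
  have hpos : 0 < u ⬝ᵥ u := dotProduct_self_star_pos_iff.2 hu0
  obtain ⟨k, hk⟩ : ∃ k : ℤ, u ⬝ᵥ u = k / 4 := by
    obtain ⟨m, rfl⟩ := hu
    refine ⟨m 0 ^ 2 + m 1 ^ 2 + m 2 ^ 2 + m 0 * m 1 + m 0 * m 2 + m 1 * m 2, ?_⟩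
    have hsqrt : √2 ^ 2 = (2 : ℝ) := Real.sq_sqrt zero_le_two
    simp only [inv_transpose_bcc, smul_mulVec, smul_dotProduct, dotProduct_smul, smul_eq_mul]
    simp only [dotProduct, mulVec, Fin.sum_univ_three, of_apply, cons_val]
    push_cast
    linear_combination
      (1 / 16 : ℝ) * ((m 1 + m 2 : ℝ) ^ 2 + (m 0 + m 2 : ℝ) ^ 2 + (m 0 + m 1 : ℝ) ^ 2) * hsqrt
  have hk1 : (1 : ℝ) ≤ k := by
    have : (0 : ℝ) < k := by linarith
    exact_mod_cast this
  linarith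

theorem nonSeparable_bcc : NonSeparable (latticeOf bcc) {x | x ⬝ᵥ x ≤ 1} :=
  nonSeparable_of_one_fourth_le_dotProduct_self (by rw [det_bcc]; positivity)
    fun _ ↦ one_fourth_le_dotProduct_self_of_mem_inv_transpose_bcc

end BodyCenteredCubic

theorem toReal_volume_unitBall_fin_three :
    (volume {x : Fin 3 → ℝ | x ⬝ᵥ x ≤ 1}).toReal = Real.pi * 4 / 3 := by
  have hball : {x : Fin 3 → ℝ | x ⬝ᵥ x ≤ 1} =
      WithLp.toLp 2 ⁻¹' Metric.closedBall (0 : EuclideanSpace ℝ (Fin 3)) 1 := by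
    ext x
    simp [EuclideanSpace.norm_eq, dotProduct, sq]
  rw [hball, (PiLp.volume_preserving_toLp (Fin 3)).measure_preimage
    measurableSet_closedBall.nullMeasurableSet, EuclideanSpace.volume_closedBall_fin_three,
    ENNReal.ofReal_one, one_pow, one_mul, ENNReal.toReal_ofReal (by positivity)]

/-- For the closed unit ball `B ⊆ ℝ³`: `d_{3,2}(B) = π/(6√2)`. -/
theorem d32_unit_ball :
    dTrans {x : Fin 3 → ℝ | x ⬝ᵥ x ≤ 1} = Real.pi / (6 * Real.sqrt 2) := by
  have hdensity : Real.pi / (6 * √2) = Real.pi * 4 / 3 / (8 * √2) := by ring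
  rw [hdensity, ← toReal_volume_unitBall_fin_three]
  refine IsLeast.csInf_eq ⟨⟨bcc, ?_, nonSeparable_bcc, ?_⟩, ?_⟩
  · rw [det_bcc]
    positivity
  · rw [det_bcc, abs_of_pos (by positivity)]
  · rintro _ ⟨A, hA, hns, rfl⟩
    exact div_le_div_of_nonneg_left ENNReal.toReal_nonneg (abs_pos.2 hA)
      (abs_det_le_of_nonSeparable hA hns)
end
end
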